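/- arXiv:2209.07847 — 4 statements merged into one kernel-verified Lean document; each statement's English description precedes it below -/
import Mathlib

section
/- Let I ⊂ S = K[x_1,…,x_n] be a squarefree monomial ideal. Then (a) the k-th squarefree power I^{[k]} is the zero ideal if and only if k > ν(I); and (b) for every k with 1 ≤ k ≤ ν(I), one has depth(S/I^{[k]}) ≥ d_k − 1, i.e. g_I(k) ≥ 0. -/
open MvPolynomial

section Preamble

variable (K : Type*) [Field K] {σ : Type*} [Fintype σ] [DecidableEq σ]

/-- A (monic) monomial of the polynomial ring. -/
def IsMonomial (f : MvPolynomial σ K) : Prop :=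
  ∃ d : σ →₀ ℕ, f = monomial d 1

/-- An ideal generated by monomials. -/
def IsMonomialIdeal (I : Ideal (MvPolynomial σ K)) : Prop :=
  ∃ A : Set (MvPolynomial σ K), (∀ u ∈ A, IsMonomial K u) ∧ I = Ideal.span A

/-- The unique minimal set of monomial generators `G(I)` of a monomial ideal:
the monomials of `I` that are minimal with respect to divisibility. -/
def minGens (I : Ideal (MvPolynomial σ K)) : Set (MvPolynomial σ K) :=
  {u | IsMonomial K u ∧ u ∈ I ∧ ∀ v, IsMonomial K v → v ∈ I → v ∣ u → v = u}

/-- A squarefree monomial ideal. -/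
def IsSqfreeMonomialIdeal (I : Ideal (MvPolynomial σ K)) : Prop :=
  IsMonomialIdeal K I ∧ ∀ u ∈ minGens K I, Squarefree u

/-- The `k`-th squarefree power `I^{[k]}`: the ideal generated by the squarefree
products of `k` minimal monomial generators of `I`. -/
noncomputable def sqPow (I : Ideal (MvPolynomial σ K)) (k : ℕ) : Ideal (MvPolynomial σ K) :=
  Ideal.span {u | Squarefree u ∧ ∃ l : List (MvPolynomial σ K),
    l.length = k ∧ (∀ f ∈ l, f ∈ minGens K I) ∧ u = l.prod}

/-- `ν(I)`: the maximum length of a regular sequence of monomials in `I`. -/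
noncomputable def monNu (I : Ideal (MvPolynomial σ K)) : ℕ :=
  sSup {m | ∃ l : List (MvPolynomial σ K), l.length = m ∧
    (∀ f ∈ l, IsMonomial K f ∧ f ∈ I) ∧
    RingTheory.Sequence.IsRegular (MvPolynomial σ K) l}

/-- The minimal degree `d` of a minimal monomial generator of `I`
(so `d_k = minDeg (I^{[k]})`). -/
noncomputable def minDeg (I : Ideal (MvPolynomial σ K)) : ℕ :=
  sInf (totalDegree '' minGens K I)

/-- `depth(S/I)`: the maximum length of an `S/I`-regular sequence of elements of
the graded maximal ideal `(x_1, …, x_n)`. -/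
noncomputable def qdepth (I : Ideal (MvPolynomial σ K)) : ℕ :=
  sSup {m | ∃ l : List (MvPolynomial σ K), l.length = m ∧
    (∀ f ∈ l, f ∈ Ideal.span (Set.range (X : σ → MvPolynomial σ K))) ∧
    RingTheory.Sequence.IsRegular (MvPolynomial σ K ⧸ I) l}

/-- `I` has linear quotients with respect to the ordering `L` of its minimal
monomial generators: each successive colon ideal is generated by variables. -/
def HasLinearQuotientsOrder (I : Ideal (MvPolynomial σ K))
    (L : List (MvPolynomial σ K)) : Prop :=
  L.Nodup ∧ (∀ u, u ∈ L ↔ u ∈ minGens K I) ∧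
  ∀ i : Fin L.length, 0 < (i : ℕ) →
    ∃ A : Set σ,
      Submodule.colon (Ideal.span {u | u ∈ L.take (i : ℕ)}) (Ideal.span {L.get i})
        = Ideal.span (X '' A)

/-- A monomial ideal with linear quotients. -/
def HasLinearQuotients (I : Ideal (MvPolynomial σ K)) : Prop :=
  ∃ L, HasLinearQuotientsOrder K I L

/-- A polymatroidal ideal: a monomial ideal generated in a single degree whose
minimal generators satisfy the exchange property. -/
def IsPolymatroidal (I : Ideal (MvPolynomial σ K)) : Prop :=
  IsMonomialIdeal K I ∧
  (∃ d, ∀ u ∈ minGens K I, totalDegree u = d) ∧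
  ∀ u ∈ minGens K I, ∀ v ∈ minGens K I, ∀ k : σ,
    degreeOf k v < degreeOf k u →
    ∃ l : σ, degreeOf l u < degreeOf l v ∧
      ∃ w, u = X k * w ∧ X l * w ∈ minGens K I

/-- A matroidal ideal: a polymatroidal ideal all of whose minimal generators are
squarefree. -/
def IsMatroidal (I : Ideal (MvPolynomial σ K)) : Prop :=
  IsPolymatroidal K I ∧ ∀ u ∈ minGens K I, Squarefree u

/-- The squarefree part of a monomial ideal: the ideal generated by its squarefree
minimal generators. -/
noncomputable def sqfPart (I : Ideal (MvPolynomial σ K)) : Ideal (MvPolynomial σ K) :=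
  Ideal.span {u | u ∈ minGens K I ∧ Squarefree u}

/-- The squarefree Veronese ideal `𝔪^{[d]}`, generated by all squarefree
monomials of degree `d`. -/
noncomputable def veronese (d : ℕ) : Ideal (MvPolynomial σ K) :=
  Ideal.span {u | ∃ F : Finset σ, F.card = d ∧ u = ∏ i ∈ F, X i}

/-- A chordal graph: no induced cycle of length greater than 3. -/
def IsChordal {V : Type*} (G : SimpleGraph V) : Prop :=
  ∀ m : ℕ, 4 ≤ m → ¬ ∃ f : ZMod m → V, Function.Injective f ∧
    ∀ i j : ZMod m, G.Adj (f i) (f j) ↔ (i = j + 1 ∨ j = i + 1)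

/-- A matching of `G`: a finite set of pairwise vertex-disjoint edges of `G`. -/
def IsMatching (G : SimpleGraph σ) (M : Finset (Sym2 σ)) : Prop :=
  (↑M ⊆ G.edgeSet) ∧ (M : Set (Sym2 σ)).Pairwise fun e f => ∀ v, v ∈ e → v ∉ f

/-- A `k`-matching of `G`. -/
def IsKMatching (G : SimpleGraph σ) (M : Finset (Sym2 σ)) (k : ℕ) : Prop :=
  IsMatching G M ∧ M.card = k

/-- The vertex set `V(M)` of a matching. -/
def mVerts (M : Finset (Sym2 σ)) : Finset σ :=
  Finset.univ.filter fun v => ∃ e ∈ M, v ∈ e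

/-- The squarefree monomial `∏_{v ∈ V(M)} x_v` attached to a matching. -/
noncomputable def matchMon (M : Finset (Sym2 σ)) : MvPolynomial σ K :=
  ∏ v ∈ mVerts M, X v

/-- The edge ideal `I(G)` of a finite simple graph `G`. -/
noncomputable def edgeIdeal (G : SimpleGraph σ) : Ideal (MvPolynomial σ K) :=
  Ideal.span {u | ∃ i j, G.Adj i j ∧ u = X i * X j}

/-- The `k`-th squarefree power `I(G)^{[k]}` of the edge ideal, generated by the
monomials `∏_{v ∈ V(M)} x_v` of the `k`-matchings `M` of `G`. -/
noncomputable def matchPow (G : SimpleGraph σ) (k : ℕ) : Ideal (MvPolynomial σ K) :=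
  Ideal.span {u | ∃ M : Finset (Sym2 σ), IsKMatching G M k ∧ u = matchMon K M}

/-- The matching number `ν(G)`. -/
noncomputable def matchNum (G : SimpleGraph σ) : ℕ :=
  sSup {k | ∃ M : Finset (Sym2 σ), IsKMatching G M k}

end Preamble

/-!
For (a), a sequence of non-constant monomials is regular if and only if the monomials are pairwise
coprime. Replacing each of them by a minimal generator dividing it keeps them coprime, and the
product of `k` coprime squarefree generators is squarefree, so `ν(I)` is the largest `k` with
`I^{[k]} ≠ 0`.

For (b), every squarefree power is a Stanley–Reisner ideal `I_Δ`. If all nonfaces of `Δ` have more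
than `r` vertices, with `r` at most the number of variables, then the complete homogeneous symmetric
polynomials `h_{s+1}, …, h_{s+r}` form a regular sequence on `S/I_Δ` for every `s`; this is applied
with `s = 0` and `r = d_k - 1`. The proof is by induction on the number of variables. Splitting off
a variable `x`, there is an exact sequence `0 → S/(I_Δ : x) → S/I_Δ → S/(I_Δ, x) → 0`, whose outer
terms come from the link and the deletion of `x`. The recursion
`h_{i+1}(x, y) = h_{i+1}(y) + x h_i(x, y)` shows that modulo `x` all the `h_i` lose the variable
`x`, while on the link term, an extension in `x`, the first `h_{s+1}` is monic in `x`, hence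
regular, and modulo it the remaining ones lose the variable `x`: one fewer of them is needed, and
nonfaces of the link have at most one vertex fewer. If `r` equals the number of variables, there are
no nonfaces and the monic step alone suffices.
-/

section RegularSequences

open Function RingTheory.Sequence
open scoped Pointwise

variable {R : Type*} [CommRing R]

theorem length_le_supportDim_of_isRegular {M : Type*} [AddCommGroup M] [Module R M]
    [Module.Finite R M] {l : List R} (h : IsRegular M l) :
    (l.length : WithBot ℕ∞) ≤ Module.supportDim R M := by
  induction l generalizing M with
  | nil =>
    have := h.nontrivial
    have : Nonempty (Module.support R M) := Module.nonempty_support_of_nontrivial.to_subtype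
    exact Order.krullDim_nonneg
  | cons a l ih =>
    obtain ⟨ha, hl⟩ := (isRegular_cons_iff M a l).1 h
    calc ((a :: l).length : WithBot ℕ∞) = l.length + 1 := by simp
      _ ≤ Module.supportDim R (QuotSMulTop a M) + 1 := by gcongr; exact ih hl
      _ ≤ Module.supportDim R M :=
        Module.supportDim_quotSMulTop_succ_le_of_notMem_minimalPrimes fun _ hp =>
          ha.notMem_of_mem_minimalPrimes hp

theorem isWeaklyRegular_of_exact {M₁ M₂ M₃ : Type*} [AddCommGroup M₁] [AddCommGroup M₂]
    [AddCommGroup M₃] [Module R M₁] [Module R M₂] [Module R M₃] {f : M₁ →ₗ[R] M₂}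
    {g : M₂ →ₗ[R] M₃} (hf : Injective f) (hfg : Exact f g) (hg : Surjective g) {l : List R}
    (h₁ : IsWeaklyRegular M₁ l) (h₃ : IsWeaklyRegular M₃ l) : IsWeaklyRegular M₂ l := by
  induction l generalizing M₁ M₂ M₃ with
  | nil => exact .nil R M₂
  | cons a l ih =>
    rw [isWeaklyRegular_cons_iff] at h₁ h₃ ⊢
    have hzero : Exact (0 : M₁ →ₗ[R] M₁) f := (f.exact_zero_iff_injective M₁).2 hf
    have hzero' : Exact (0 : QuotSMulTop a M₁ →ₗ[R] QuotSMulTop a M₁) (QuotSMulTop.map a f) := by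
      simpa using
        QuotSMulTop.map_first_exact_on_four_term_exact_of_isSMulRegular_last hzero hfg h₃.1
    exact ⟨isSMulRegular_of_range_eq_ker hf hfg.linearMap_ker_eq.symm h₁.1 h₃.1,
      ih (((QuotSMulTop.map a f).exact_zero_iff_injective _).1 hzero')
        (QuotSMulTop.map_exact a hfg hg) (QuotSMulTop.map_surjective a hg) h₁.2 h₃.2⟩

theorem mem_sup_span_singleton {J : Ideal R} {a p : R} :
    p ∈ J ⊔ Ideal.span {a} ↔ ∃ q, p - a * q ∈ J := by
  rw [sup_comm, Ideal.mem_span_singleton_sup]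
  refine exists_congr fun q => ⟨?_, fun h => ⟨_, h, by ring⟩⟩
  rintro ⟨b, hb, rfl⟩
  rwa [mul_comm, add_sub_cancel_left]

theorem isWeaklyRegular_quotient_of_colon {J J' : Ideal R} {x : R} (hJ' : ∀ q, q ∈ J' ↔ x * q ∈ J)
    {l : List R} (hcolon : IsWeaklyRegular (R ⧸ J') l)
    (hsup : IsWeaklyRegular (R ⧸ (J ⊔ Ideal.span {x})) l) : IsWeaklyRegular (R ⧸ J) l := by
  have hle : J' ≤ Submodule.comap (LinearMap.mulLeft R x) J := fun q hq => (hJ' q).1 hq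
  refine isWeaklyRegular_of_exact (f := Submodule.mapQ J' J (LinearMap.mulLeft R x) hle)
    (g := Submodule.factor le_sup_left) ?_ ?_ (Submodule.factor_surjective _) hcolon hsup
  · refine (injective_iff_map_eq_zero _).2 (J'.mkQ_surjective.forall.2 fun q hq => ?_)
    exact (Submodule.Quotient.mk_eq_zero J').2 ((hJ' q).2 ((Submodule.Quotient.mk_eq_zero J).1 hq))
  · refine J.mkQ_surjective.forall.2 fun p => ?_
    simp only [Submodule.mkQ_apply, Submodule.Quotient.mk_eq_zero,
      mem_sup_span_singleton, Set.mem_range, J'.mkQ_surjective.exists, Submodule.mapQ_apply,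
      LinearMap.mulLeft_apply, Submodule.Quotient.eq]
    exact exists_congr fun q => by rw [← neg_mem_iff, neg_sub, LinearMap.id_apply]

theorem isWeaklyRegular_quotient_cons_congr {J : Ideal R} {a b : R} (h : a - b ∈ J) {l : List R} :
    IsWeaklyRegular (R ⧸ J) (a :: l) ↔ IsWeaklyRegular (R ⧸ J) (b :: l) := by
  refine AddEquiv.isWeaklyRegular_congr (e := .refl _)
    (.cons (J.mkQ_surjective.forall.2 fun p => ?_) (List.forall₂_same.2 fun _ _ _ => rfl))
  refine (Submodule.Quotient.eq J).2 ?_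
  rw [← sub_smul]
  exact J.mul_mem_right p h

theorem smul_top_quotient (J A : Ideal R) :
    A • (⊤ : Submodule R (R ⧸ J)) = Submodule.map J.mkQ A := by
  rw [← J.range_mkQ, ← Submodule.map_top, ← Submodule.map_smul'', smul_eq_mul, Ideal.mul_top]

theorem isWeaklyRegular_quotient_cons_iff {J : Ideal R} {a : R} {l : List R} :
    IsWeaklyRegular (R ⧸ J) (a :: l) ↔
      IsSMulRegular (R ⧸ J) a ∧ IsWeaklyRegular (R ⧸ (J ⊔ Ideal.span {a})) l := by
  have hsmul : a • (⊤ : Submodule R (R ⧸ J)) = Submodule.map J.mkQ (Ideal.span {a}) := by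
    rw [← smul_top_quotient, Submodule.ideal_span_singleton_smul]
  let e : QuotSMulTop a (R ⧸ J) ≃ₗ[R] R ⧸ (J ⊔ Ideal.span {a}) :=
    Submodule.quotEquivOfEq _ _ hsmul ≪≫ₗ
      Submodule.quotientQuotientEquivQuotientSup J (Ideal.span {a})
  rw [isWeaklyRegular_cons_iff, e.isWeaklyRegular_congr]

theorem isRegular_quotient_of_le {J m : Ideal R} (hm : m ≠ ⊤) (hJ : J ≤ m) {l : List R}
    (hlm : ∀ a ∈ l, a ∈ m) (hl : IsWeaklyRegular (R ⧸ J) l) : IsRegular (R ⧸ J) l := by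
  refine ⟨hl, fun htop => hm ?_⟩
  rw [smul_top_quotient] at htop
  have hsup : J ⊔ Ideal.ofList l = ⊤ := by
    rw [← Submodule.comap_map_mkQ, ← htop, Submodule.comap_top]
  rw [eq_top_iff, ← hsup]
  exact sup_le hJ (Ideal.span_le.2 hlm)

theorem isWeaklyRegular_quotient_congr {S : Type*} [CommRing S] {I : Ideal R} {J : Ideal S}
    (e : R ≃+* S) (hIJ : ∀ p, p ∈ I ↔ e p ∈ J) (l : List R) :
    IsWeaklyRegular (R ⧸ I) l ↔ IsWeaklyRegular (S ⧸ J) (l.map e) := by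
  obtain rfl : I = J.comap (e : R →+* S) := Ideal.ext hIJ
  let e' := Ideal.quotientEquiv _ J e (Ideal.map_comap_of_surjective _ e.surjective J).symm
  refine AddEquiv.isWeaklyRegular_congr (e := e'.toAddEquiv) <| List.forall₂_map_right_iff.2 <|
    List.forall₂_same.2 fun r _ => Ideal.Quotient.mk_surjective.forall.2 fun p => ?_
  exact congrArg (Ideal.Quotient.mk J) (map_mul e r p)

end RegularSequences

section PolynomialExtension

open Polynomial RingTheory.Sequence

variable {A : Type*} [CommRing A]

theorem mem_map_C_iff_map_mk_eq_zero {I : Ideal A} {p : A[X]} :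
    p ∈ I.map Polynomial.C ↔ p.map (Ideal.Quotient.mk I) = 0 := by
  simp [Ideal.mem_map_C_iff, Polynomial.ext_iff, Ideal.Quotient.eq_zero_iff_mem]

theorem mem_map_C_sup_span_iff_modByMonic_mem {g : A[X]} (hg : g.Monic) {I : Ideal A} {p : A[X]} :
    p ∈ I.map Polynomial.C ⊔ Ideal.span {g} ↔ p %ₘ g ∈ I.map Polynomial.C := by
  refine ⟨fun hp => ?_, fun hp => mem_sup_span_singleton.2 ⟨p /ₘ g, ?_⟩⟩
  · obtain ⟨q, hq⟩ := mem_sup_span_singleton.1 hp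
    rw [mem_map_C_iff_map_mk_eq_zero, Polynomial.map_sub, Polynomial.map_mul, sub_eq_zero] at hq
    rw [mem_map_C_iff_map_mk_eq_zero, map_modByMonic _ hg, hq,
      (modByMonic_eq_zero_iff_dvd (hg.map _)).2 (dvd_mul_right _ _)]
  · rwa [← modByMonic_eq_sub_mul_div]

theorem isSMulRegular_quotient_map_C_of_monic {g : A[X]} (hg : g.Monic) (I : Ideal A) :
    IsSMulRegular (A[X] ⧸ I.map Polynomial.C) g := by
  refine (isSMulRegular_quotient_iff_mem_of_smul_mem _ _).2 fun p hp => ?_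
  rw [smul_eq_mul, mem_map_C_iff_map_mk_eq_zero, Polynomial.map_mul] at hp
  exact mem_map_C_iff_map_mk_eq_zero.2 ((hg.map _).mul_right_eq_zero_iff.1 hp)

theorem isWeaklyRegular_quotient_map_C_sup_span {g : A[X]} (hg : g.Monic) {I : Ideal A}
    {l : List A} (hl : IsWeaklyRegular (A ⧸ I) l) :
    IsWeaklyRegular (A[X] ⧸ (I.map Polynomial.C ⊔ Ideal.span {g})) (l.map Polynomial.C) := by
  induction l generalizing I with
  | nil => exact .nil _ _
  | cons a l ih =>
    rw [isWeaklyRegular_quotient_cons_iff, isSMulRegular_quotient_iff_mem_of_smul_mem] at hl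
    rw [List.map_cons, isWeaklyRegular_quotient_cons_iff,
      isSMulRegular_quotient_iff_mem_of_smul_mem]
    refine ⟨fun p hp => ?_, ?_⟩
    · rw [smul_eq_mul, mem_map_C_sup_span_iff_modByMonic_mem hg, ← Polynomial.smul_eq_C_mul,
        smul_modByMonic, Ideal.mem_map_C_iff] at hp
      rw [mem_map_C_sup_span_iff_modByMonic_mem hg, Ideal.mem_map_C_iff]
      exact fun i => hl.1 _ (by simpa using hp i)
    · have htail := ih hl.2
      rwa [Ideal.map_sup, Ideal.map_span, Set.image_singleton, sup_right_comm] at htail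

variable {I₀ I₁ : Ideal A} {J : Ideal A[X]}

theorem sup_span_X_eq_of_mem_iff_coeff (hle : I₀ ≤ I₁)
    (hJ : ∀ q : A[X], q ∈ J ↔ q.coeff 0 ∈ I₀ ∧ ∀ i, q.coeff (i + 1) ∈ I₁) :
    J ⊔ Ideal.span {Polynomial.X} = I₀.map Polynomial.C ⊔ Ideal.span {Polynomial.X} := by
  refine le_antisymm (sup_le (fun q hq => ?_) le_sup_right)
    (sup_le (fun q hq => Ideal.mem_sup_left ?_) le_sup_right)
  · refine mem_sup_span_singleton.2 ⟨q.divX, ?_⟩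
    rw [← eq_sub_of_add_eq' (X_mul_divX_add q)]
    exact Ideal.mem_map_of_mem _ ((hJ q).1 hq).1
  · have hcoeff := Ideal.mem_map_C_iff.1 hq
    exact (hJ q).2 ⟨hcoeff 0, fun i => hle (hcoeff (i + 1))⟩

theorem isWeaklyRegular_quotient_of_mem_iff_coeff (hle : I₀ ≤ I₁)
    (hJ : ∀ q : A[X], q ∈ J ↔ q.coeff 0 ∈ I₀ ∧ ∀ i, q.coeff (i + 1) ∈ I₁) {l : List A[X]}
    (h₁ : IsWeaklyRegular (A[X] ⧸ I₁.map Polynomial.C) l)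
    (h₀ : IsWeaklyRegular (A[X] ⧸ (I₀.map Polynomial.C ⊔ Ideal.span {Polynomial.X})) l) :
    IsWeaklyRegular (A[X] ⧸ J) l := by
  refine isWeaklyRegular_quotient_of_colon (x := Polynomial.X) (fun q => ?_) h₁
    (by rwa [sup_span_X_eq_of_mem_iff_coeff hle hJ])
  simp [hJ, Ideal.mem_map_C_iff]

end PolynomialExtension

section CompleteHomogeneous

open RingTheory.Sequence

theorem optionEquivLeft_rename_some {σ R : Type*} [CommRing R] (p : MvPolynomial σ R) :
    optionEquivLeft R σ (rename some p) = Polynomial.C p := by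
  induction p using MvPolynomial.induction_on <;> simp_all

theorem idealOfVars_ne_top {σ R : Type*} [CommRing R] [Nontrivial R] : idealOfVars σ R ≠ ⊤ := by
  rw [Ideal.ne_top_iff_one, ← pow_one (idealOfVars σ R), ← C_1, C_mem_pow_idealOfVars_iff]
  simp

variable (σ R : Type*) [CommRing R] [Fintype σ] [DecidableEq σ]

theorem hsymm_option_succ (i : ℕ) :
    hsymm (Option σ) R (i + 1) =
      rename some (hsymm σ R (i + 1)) + X none * hsymm (Option σ) R i := by
  rw [hsymm, ← Equiv.sum_comp (symOptionSuccEquiv (α := σ) (n := i)).symm,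
    Fintype.sum_sum_type, add_comm]
  congr 1
  · simp only [hsymm, map_sum]
    refine Finset.sum_congr rfl fun s _ => ?_
    change ((s.1.map some).map X).prod = rename some (s.1.map X).prod
    simp [map_multiset_prod, Multiset.map_map]
  · rw [hsymm, Finset.mul_sum]
    refine Finset.sum_congr rfl fun s _ => ?_
    change ((none ::ₘ s.1).map X).prod = _
    rw [Multiset.map_cons, Multiset.prod_cons]

theorem optionEquivLeft_hsymm_succ (i : ℕ) :
    optionEquivLeft R σ (hsymm (Option σ) R (i + 1)) =
      Polynomial.C (hsymm σ R (i + 1)) +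
        Polynomial.X * optionEquivLeft R σ (hsymm (Option σ) R i) := by
  rw [hsymm_option_succ, map_add, map_mul, optionEquivLeft_X_none, optionEquivLeft_rename_some]

theorem monic_optionEquivLeft_hsymm (i : ℕ) :
    (optionEquivLeft R σ (hsymm (Option σ) R i)).Monic := by
  nontriviality R
  induction i with
  | zero => simp
  | succ i ih =>
    rw [optionEquivLeft_hsymm_succ]
    refine (Polynomial.monic_X.mul ih).add_of_right (Polynomial.degree_C_le.trans_lt ?_)
    rw [← Polynomial.natDegree_pos_iff_degree_pos]
    simp [ih.ne_zero]

theorem hsymm_succ_mem_idealOfVars (i : ℕ) : hsymm σ R (i + 1) ∈ idealOfVars σ R := by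
  refine sum_mem fun s _ => ?_
  obtain ⟨j, hj⟩ := s.exists_mem
  exact Ideal.mem_of_dvd _ (Multiset.dvd_prod (Multiset.mem_map_of_mem X hj))
    (Ideal.subset_span (Set.mem_range_self j))

/-- The sequence `h_s, h_{s+1}, …, h_{s+r-1}` of complete homogeneous symmetric polynomials, which
serves as an explicit regular sequence on Stanley–Reisner rings. -/
noncomputable def hsymmSeq (s r : ℕ) : List (MvPolynomial σ R) :=
  (List.range' s r).map (hsymm σ R)

theorem hsymmSeq_succ (s r : ℕ) :
    hsymmSeq σ R s (r + 1) = hsymm σ R s :: hsymmSeq σ R (s + 1) r := rfl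

theorem length_hsymmSeq (s r : ℕ) : (hsymmSeq σ R s r).length = r := by
  simp [hsymmSeq]

theorem map_rename_hsymmSeq {τ : Type*} [Fintype τ] [DecidableEq τ] (e : σ ≃ τ) (s r : ℕ) :
    (hsymmSeq σ R s r).map (rename e) = hsymmSeq τ R s r := by
  simp [hsymmSeq, rename_hsymm, Function.comp_def]

variable {σ R}

theorem mem_idealOfVars_of_mem_hsymmSeq {s r : ℕ} {f : MvPolynomial σ R}
    (hf : f ∈ hsymmSeq σ R (s + 1) r) : f ∈ idealOfVars σ R := by
  obtain ⟨i, hi, rfl⟩ := List.mem_map.1 hf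
  obtain ⟨j, rfl⟩ := Nat.exists_eq_add_of_le' (List.left_le_of_mem_range' hi)
  exact hsymm_succ_mem_idealOfVars σ R (j + s)

-- Modulo an ideal containing `x h_s(x, σ)`, the recursion gives `h_{s+1}(x, σ) ≡ h_{s+1}(σ)`.
theorem isWeaklyRegular_quotient_map_hsymmSeq {J : Ideal (Polynomial (MvPolynomial σ R))}
    {s r : ℕ} (hJ : Polynomial.X * optionEquivLeft R σ (hsymm (Option σ) R s) ∈ J)
    (h : IsWeaklyRegular (Polynomial (MvPolynomial σ R) ⧸ J)
      ((hsymmSeq σ R (s + 1) r).map Polynomial.C)) :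
    IsWeaklyRegular (Polynomial (MvPolynomial σ R) ⧸ J)
      ((hsymmSeq (Option σ) R (s + 1) r).map (optionEquivLeft R σ)) := by
  induction r generalizing J s with
  | zero => exact .nil _ _
  | succ r ih =>
    rw [hsymmSeq_succ, List.map_cons] at h ⊢
    have hcongr : optionEquivLeft R σ (hsymm (Option σ) R (s + 1)) -
        Polynomial.C (hsymm σ R (s + 1)) ∈ J := by
      rwa [optionEquivLeft_hsymm_succ, add_sub_cancel_left]
    rw [isWeaklyRegular_quotient_cons_iff] at h
    rw [isWeaklyRegular_quotient_cons_congr hcongr, isWeaklyRegular_quotient_cons_iff]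
    refine ⟨h.1, ih (Ideal.mul_mem_left _ _ ?_) h.2⟩
    exact mem_sup_span_singleton.2 ⟨1, by rwa [mul_one]⟩

theorem isWeaklyRegular_quotient_map_C_hsymmSeq {I : Ideal (MvPolynomial σ R)} {s r : ℕ}
    (h : IsWeaklyRegular (MvPolynomial σ R ⧸ I) (hsymmSeq σ R (s + 1) r)) :
    IsWeaklyRegular (Polynomial (MvPolynomial σ R) ⧸ I.map Polynomial.C)
      ((hsymmSeq (Option σ) R s (r + 1)).map (optionEquivLeft R σ)) := by
  have hmonic := monic_optionEquivLeft_hsymm σ R s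
  rw [hsymmSeq_succ, List.map_cons, isWeaklyRegular_quotient_cons_iff]
  refine ⟨isSMulRegular_quotient_map_C_of_monic hmonic _,
    isWeaklyRegular_quotient_map_hsymmSeq (Ideal.mul_mem_left _ _ ?_)
      (isWeaklyRegular_quotient_map_C_sup_span hmonic h)⟩
  exact Ideal.mem_sup_right (Ideal.mem_span_singleton_self _)

theorem isWeaklyRegular_quotient_map_C_sup_span_X_hsymmSeq {I : Ideal (MvPolynomial σ R)}
    {s r : ℕ} (h : IsWeaklyRegular (MvPolynomial σ R ⧸ I) (hsymmSeq σ R (s + 1) r)) :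
    IsWeaklyRegular
      (Polynomial (MvPolynomial σ R) ⧸ (I.map Polynomial.C ⊔ Ideal.span {Polynomial.X}))
      ((hsymmSeq (Option σ) R (s + 1) r).map (optionEquivLeft R σ)) :=
  isWeaklyRegular_quotient_map_hsymmSeq
    (Ideal.mul_mem_right _ _ (Ideal.mem_sup_right (Ideal.mem_span_singleton_self _)))
    (isWeaklyRegular_quotient_map_C_sup_span Polynomial.monic_X h)

end CompleteHomogeneous

section StanleyReisner

open RingTheory.Sequence

variable {σ τ : Type*}

/-- The Stanley–Reisner ideal of the simplicial complex whose set of nonfaces is `N`, encoded by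
the support condition on monomials rather than by generators. -/
noncomputable def stanleyReisnerIdeal (R : Type*) [CommRing R] (N : UpperSet (Finset σ)) :
    Ideal (MvPolynomial σ R) :=
  restrictSupportIdeal R (Finsupp.support ⁻¹' (N : Set (Finset σ)))
    (N.upper.preimage fun _ _ => Finsupp.support_mono)

/-- The nonfaces of the pullback of a simplicial complex along an injection of vertex sets. For
`Function.Embedding.some : σ ↪ Option σ` this is the deletion of the vertex `none`. -/
def nonfaceComap (f : τ ↪ σ) (N : UpperSet (Finset σ)) : UpperSet (Finset τ) :=
  ⟨{F | F.map f ∈ N}, fun _ _ hFG hF => N.upper (Finset.map_subset_map.2 hFG) hF⟩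

/-- The nonfaces of the link of the vertex `none`: their Stanley–Reisner ideal generates the colon
ideal by the variable `X none`. -/
def nonfaceLink (N : UpperSet (Finset (Option σ))) : UpperSet (Finset σ) :=
  ⟨{F | F.insertNone ∈ N}, fun _ _ hFG hF => N.upper (Finset.insertNone.monotone hFG) hF⟩

variable {R : Type*} [CommRing R]

theorem mem_stanleyReisnerIdeal {N : UpperSet (Finset σ)} {p : MvPolynomial σ R} :
    p ∈ stanleyReisnerIdeal R N ↔ ∀ d ∈ p.support, d.support ∈ N :=
  Iff.rfl

theorem stanleyReisnerIdeal_anti {N N' : UpperSet (Finset σ)} (h : N ≤ N') :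
    stanleyReisnerIdeal R N' ≤ stanleyReisnerIdeal R N :=
  fun _ hp _ hd => h (hp hd)

theorem stanleyReisnerIdeal_top : stanleyReisnerIdeal R (⊤ : UpperSet (Finset σ)) = ⊥ := by
  ext p
  simp [mem_stanleyReisnerIdeal, MvPolynomial.ext_iff]

theorem monomial_mem_stanleyReisnerIdeal [Nontrivial R] {N : UpperSet (Finset σ)}
    {d : σ →₀ ℕ} : monomial d 1 ∈ stanleyReisnerIdeal R N ↔ d.support ∈ N := by
  classical
  rw [mem_stanleyReisnerIdeal, support_monomial, if_neg one_ne_zero]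
  simp

theorem stanleyReisnerIdeal_le_idealOfVars {N : UpperSet (Finset σ)} (hN : ∅ ∉ N) :
    stanleyReisnerIdeal R N ≤ idealOfVars σ R := by
  intro p hp
  rw [← pow_one (idealOfVars σ R), mem_pow_idealOfVars_iff]
  refine fun d hd => Nat.one_le_iff_ne_zero.2 fun hzero => hN ?_
  simpa [(Finsupp.degree_eq_zero_iff d).1 hzero] using mem_stanleyReisnerIdeal.1 hp d hd

theorem span_monomial_eq_stanleyReisnerIdeal {E : Set (σ →₀ ℕ)} (hE : ∀ e ∈ E, ∀ i, e i ≤ 1) :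
    Ideal.span ((monomial · (1 : R)) '' E) =
      stanleyReisnerIdeal R (upperClosure (Finsupp.support '' E)) := by
  ext p
  rw [mem_ideal_span_monomial_image, mem_stanleyReisnerIdeal]
  refine forall₂_congr fun d _ => ?_
  simp only [mem_upperClosure, Set.exists_mem_image]
  refine exists_congr fun e => and_congr_right fun he => ⟨Finsupp.support_mono, fun h i => ?_⟩
  by_cases hi : i ∈ e.support
  · exact (hE e he i).trans (Nat.one_le_iff_ne_zero.2 (Finsupp.mem_support_iff.1 (h hi)))
  · simp [Finsupp.notMem_support_iff.1 hi]

theorem rename_mem_stanleyReisnerIdeal {f : τ ↪ σ} {N : UpperSet (Finset σ)}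
    {p : MvPolynomial τ R} :
    rename f p ∈ stanleyReisnerIdeal R N ↔ p ∈ stanleyReisnerIdeal R (nonfaceComap f N) := by
  classical
  simp only [mem_stanleyReisnerIdeal, support_rename_of_injective f.injective,
    Finset.forall_mem_image, Finsupp.mapDomain_support_of_injective f.injective,
    ← Finset.map_eq_image]
  rfl

theorem nonfaceLink_le_nonfaceComap_some (N : UpperSet (Finset (Option σ))) :
    nonfaceLink N ≤ nonfaceComap .some N :=
  fun F hF => N.upper (a := F.map .some) (fun o ho => by aesop) hF

theorem support_optionElim_zero (d : σ →₀ ℕ) : (d.optionElim 0).support = d.support.map .some := by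
  ext (_ | a) <;> simp

theorem support_optionElim_succ (d : σ →₀ ℕ) (i : ℕ) :
    (d.optionElim (i + 1)).support = d.support.insertNone := by
  ext (_ | a) <;> simp

theorem mem_stanleyReisnerIdeal_iff_coeff_optionEquivLeft {N : UpperSet (Finset (Option σ))}
    {p : MvPolynomial (Option σ) R} :
    p ∈ stanleyReisnerIdeal R N ↔
      (optionEquivLeft R σ p).coeff 0 ∈ stanleyReisnerIdeal R (nonfaceComap .some N) ∧
        ∀ i, (optionEquivLeft R σ p).coeff (i + 1) ∈ stanleyReisnerIdeal R (nonfaceLink N) := by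
  have hsplit : p ∈ stanleyReisnerIdeal R N ↔
      ∀ (i : ℕ) (d : σ →₀ ℕ), d.optionElim i ∈ p.support → (d.optionElim i).support ∈ N := by
    rw [mem_stanleyReisnerIdeal]
    refine ⟨fun h i d => h _, fun h d hd => ?_⟩
    rw [← d.optionElim_some] at hd ⊢
    exact h _ _ hd
  rw [hsplit, ← Nat.and_forall_add_one]
  simp only [mem_stanleyReisnerIdeal, mem_support_coeff_optionEquivLeft, support_optionElim_zero,
    support_optionElim_succ]
  rfl

section Fintype

variable [Fintype σ] [DecidableEq σ]

theorem isWeaklyRegular_quotient_bot_hsymmSeq_option {s r : ℕ}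
    (h : IsWeaklyRegular (MvPolynomial σ R ⧸ (⊥ : Ideal (MvPolynomial σ R)))
      (hsymmSeq σ R (s + 1) r)) :
    IsWeaklyRegular (MvPolynomial (Option σ) R ⧸ (⊥ : Ideal (MvPolynomial (Option σ) R)))
      (hsymmSeq (Option σ) R s (r + 1)) := by
  refine (isWeaklyRegular_quotient_congr (optionEquivLeft R σ).toRingEquiv
    (J := (⊥ : Ideal (MvPolynomial σ R)).map Polynomial.C) (fun p => ?_) _).2
      (isWeaklyRegular_quotient_map_C_hsymmSeq h)
  simp [Ideal.map_bot]

theorem isWeaklyRegular_stanleyReisnerIdeal_hsymmSeq_option {N : UpperSet (Finset (Option σ))}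
    {s r : ℕ}
    (hlink : IsWeaklyRegular (MvPolynomial σ R ⧸ stanleyReisnerIdeal R (nonfaceLink N))
      (hsymmSeq σ R (s + 2) r))
    (hdel : IsWeaklyRegular (MvPolynomial σ R ⧸ stanleyReisnerIdeal R (nonfaceComap .some N))
      (hsymmSeq σ R (s + 1) (r + 1))) :
    IsWeaklyRegular (MvPolynomial (Option σ) R ⧸ stanleyReisnerIdeal R N)
      (hsymmSeq (Option σ) R (s + 1) (r + 1)) := by
  let e := (optionEquivLeft R σ).toRingEquiv
  let J := (stanleyReisnerIdeal R N).comap (e.symm : Polynomial (MvPolynomial σ R) →+* _)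
  have hJ (q) : q ∈ J ↔ q.coeff 0 ∈ stanleyReisnerIdeal R (nonfaceComap .some N) ∧
      ∀ i, q.coeff (i + 1) ∈ stanleyReisnerIdeal R (nonfaceLink N) := by
    rw [Ideal.mem_comap, mem_stanleyReisnerIdeal_iff_coeff_optionEquivLeft]
    simp [e]
  refine (isWeaklyRegular_quotient_congr e (J := J) (fun p => ?_) _).2 <|
    isWeaklyRegular_quotient_of_mem_iff_coeff
      (stanleyReisnerIdeal_anti (nonfaceLink_le_nonfaceComap_some N)) hJ
      (isWeaklyRegular_quotient_map_C_hsymmSeq hlink)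
      (isWeaklyRegular_quotient_map_C_sup_span_X_hsymmSeq hdel)
  simp [J]

end Fintype

theorem isWeaklyRegular_stanleyReisnerIdeal_hsymmSeq [fin : Fintype σ] [dec : DecidableEq σ]
    (s : ℕ) {N : UpperSet (Finset σ)} {r : ℕ} (hr : r ≤ Fintype.card σ)
    (hN : ∀ F ∈ N, r < F.card) :
    IsWeaklyRegular (MvPolynomial σ R ⧸ stanleyReisnerIdeal R N) (hsymmSeq σ R (s + 1) r) := by
  classical
  obtain rfl := Subsingleton.elim (fun a b => Classical.propDecidable (a = b)) dec
  revert s N r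
  refine Fintype.induction_empty_option ?of_equiv ?empty ?option σ (h_fintype := fin)
  case of_equiv =>
    intro τ σ _ e ih s N r hr hN
    let := Fintype.ofEquiv σ e.symm
    rw [← map_rename_hsymmSeq τ R e]
    refine (isWeaklyRegular_quotient_congr (renameEquiv R e).toRingEquiv
      (fun p => (rename_mem_stanleyReisnerIdeal (f := e.toEmbedding)).symm) _).1
      (ih s (by rwa [Fintype.card_congr e]) fun F hF => ?_)
    simpa using hN _ hF
  case empty =>
    intro s N r hr _
    obtain rfl : r = 0 := by simpa using hr
    exact .nil _ _
  case option =>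
    rintro σ _ ih s N (_ | r) hr hN
    · exact .nil _ _
    rw [Fintype.card_option] at hr
    rw [Subsingleton.elim (fun a b : Option σ => Classical.propDecidable (a = b))
      Option.instDecidableEq]
    have hlink : ∀ F ∈ nonfaceLink N, r < F.card := fun F hF => by simpa using hN _ hF
    obtain hr' | hr' : r + 1 ≤ Fintype.card σ ∨ r = Fintype.card σ := by omega
    · exact isWeaklyRegular_stanleyReisnerIdeal_hsymmSeq_option (ih _ (by omega) hlink)
        (ih _ hr' fun F hF => by simpa using hN _ hF)
    · obtain rfl : N = ⊤ := by
        refine UpperSet.ext (Set.eq_empty_of_forall_notMem fun F hF => (hN F hF).not_ge ?_)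
        simpa [hr'] using F.card_le_univ
      have hbot := ih (s + 1) (N := ⊤) hr'.le (by simp)
      rw [stanleyReisnerIdeal_top] at hbot ⊢
      exact isWeaklyRegular_quotient_bot_hsymmSeq_option hbot

end StanleyReisner

section Monomials

open RingTheory.Sequence

variable {σ R : Type*} [CommRing R]

section Regularity

variable [Nontrivial R]

theorem monomial_one_mem_span_monomial_iff {E : Set (σ →₀ ℕ)} {d : σ →₀ ℕ} :
    monomial d (1 : R) ∈ Ideal.span ((monomial · 1) '' E) ↔ ∃ e ∈ E, e ≤ d := by
  classical
  rw [mem_ideal_span_monomial_image, support_monomial, if_neg one_ne_zero]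
  simp

theorem finsupp_le_of_le_add_of_disjoint {e v d : σ →₀ ℕ} (h : e ≤ v + d) (hev : Disjoint e v) :
    e ≤ d := by
  intro i
  have hi : e i ≤ v i + d i := h i
  have hmin : e i ⊓ v i = 0 := DFunLike.congr_fun (disjoint_iff.1 hev) i
  omega

theorem isSMulRegular_quotient_span_monomial_iff {E : Set (σ →₀ ℕ)} (hE : E.PairwiseDisjoint id)
    (hE₀ : 0 ∉ E) {v : σ →₀ ℕ} :
    IsSMulRegular (MvPolynomial σ R ⧸ Ideal.span ((monomial · (1 : R)) '' E)) (monomial v (1 : R)) ↔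
      ∀ e ∈ E, Disjoint e v := by
  rw [isSMulRegular_quotient_iff_mem_of_smul_mem]
  refine ⟨fun h e he => ?_, fun h p hp => ?_⟩
  · have hmul : monomial v (1 : R) • monomial (e - v) (1 : R) ∈
        Ideal.span ((monomial · (1 : R)) '' E) := by
      rw [smul_eq_mul, monomial_mul, one_mul, monomial_one_mem_span_monomial_iff]
      exact ⟨e, he, le_add_tsub⟩
    obtain ⟨e', he', hle⟩ := monomial_one_mem_span_monomial_iff.1 (h _ hmul)
    have hne : e' ≠ 0 := ne_of_mem_of_not_mem he' hE₀
    obtain rfl : e' = e := hE.elim he' he fun hdisj =>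
      hne (hdisj.eq_bot_of_le (hle.trans tsub_le_self))
    refine disjoint_iff.2 (Finsupp.ext fun i => ?_)
    have hi : e' i ≤ e' i - v i := hle i
    change e' i ⊓ v i = 0
    omega
  · rw [smul_eq_mul, mem_ideal_span_monomial_image] at hp
    refine mem_ideal_span_monomial_image.2 fun d hd => ?_
    obtain ⟨e, he, hle⟩ := hp (v + d) (by simpa [coeff_monomial_mul] using hd)
    exact ⟨e, he, finsupp_le_of_le_add_of_disjoint hle (h e he)⟩

theorem isWeaklyRegular_quotient_span_monomial_iff {E : Set (σ →₀ ℕ)}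
    (hE : E.PairwiseDisjoint id) (hE₀ : 0 ∉ E) {ds : List (σ →₀ ℕ)} (hds : 0 ∉ ds) :
    IsWeaklyRegular (MvPolynomial σ R ⧸ Ideal.span ((monomial · (1 : R)) '' E))
        (ds.map (monomial · (1 : R))) ↔
      (∀ e ∈ E, ∀ d ∈ ds, Disjoint e d) ∧ ds.Pairwise Disjoint := by
  induction ds generalizing E with
  | nil => simp
  | cons v ds ih =>
    rw [List.mem_cons, not_or] at hds
    rw [List.map_cons, isWeaklyRegular_quotient_cons_iff,
      isSMulRegular_quotient_span_monomial_iff hE hE₀, sup_comm, ← Ideal.span_insert,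
      ← Set.image_insert_eq (f := (monomial · (1 : R))), List.pairwise_cons]
    simp only [List.forall_mem_cons, forall_and]
    have hinsert (h : ∀ e ∈ E, Disjoint e v) := ih (hE.insert fun e he _ => (h e he).symm)
      (fun h₀ => h₀.elim hds.1 hE₀) hds.2
    constructor
    · rintro ⟨hv, htail⟩
      rw [hinsert hv, Set.forall_mem_insert] at htail
      exact ⟨⟨hv, htail.1.2⟩, htail.1.1, htail.2⟩
    · rintro ⟨⟨hv, hEds⟩, hvds, hds⟩
      rw [hinsert hv, Set.forall_mem_insert]
      exact ⟨hv, ⟨hvds, hEds⟩, hds⟩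

theorem isWeaklyRegular_map_monomial_iff {ds : List (σ →₀ ℕ)} (hds : 0 ∉ ds) :
    IsWeaklyRegular (MvPolynomial σ R) (ds.map (monomial · (1 : R))) ↔ ds.Pairwise Disjoint := by
  have hbot : Ideal.span ((monomial · (1 : R)) '' (∅ : Set (σ →₀ ℕ))) = ⊥ := by simp
  rw [← (Submodule.quotEquivOfEqBot _ hbot).isWeaklyRegular_congr,
    isWeaklyRegular_quotient_span_monomial_iff (by simp) (by simp) hds]
  simp

end Regularity

theorem prod_map_monomial_one (ds : List (σ →₀ ℕ)) :
    (ds.map (monomial · (1 : R))).prod = monomial ds.sum 1 := by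
  induction ds with
  | nil => rfl
  | cons d ds ih => rw [List.map_cons, List.prod_cons, ih, List.sum_cons, monomial_mul, one_mul]

section Squarefree

variable [IsDomain R]

theorem isRelPrime_monomial_one_iff {a b : σ →₀ ℕ} :
    IsRelPrime (monomial a (1 : R)) (monomial b 1) ↔ Disjoint a b := by
  refine ⟨fun h => ?_, fun h c ha hb => ?_⟩
  · rw [Finsupp.disjoint_iff, Finset.disjoint_left]
    intro i ha hb
    refine (X_prime (R := R) (i := i)).not_isUnit (h ?_ ?_) <;> rw [X_dvd_monomial]
    exacts [.inr (Finsupp.mem_support_iff.1 ha), .inr (Finsupp.mem_support_iff.1 hb)]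
  · obtain ⟨m, u, hm, hu, rfl⟩ := dvd_monomial_one_iff_exists.1 ha
    have hmb : m ≤ b := by
      rw [← mul_one u, ← C_mul_monomial] at hb
      exact monomial_one_dvd_monomial_one.1 (dvd_of_mul_left_dvd hb)
    obtain rfl : m = 0 := le_bot_iff.1 (h hm hmb)
    exact hu.map C

theorem apply_le_one_of_squarefree_monomial {d : σ →₀ ℕ} (h : Squarefree (monomial d (1 : R)))
    (i : σ) : d i ≤ 1 := by
  by_contra! hi
  refine (X_prime (R := R) (i := i)).not_isUnit (h (X i) ?_)
  rw [X, monomial_mul, one_mul, monomial_one_dvd_monomial_one, ← Finsupp.single_add]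
  exact Finsupp.single_le_iff.2 hi

theorem isRelPrime_monomial_prod_map_monomial_iff [UniqueFactorizationMonoid R] {a : σ →₀ ℕ}
    {ds : List (σ →₀ ℕ)} :
    IsRelPrime (monomial a (1 : R)) (ds.map (monomial · (1 : R))).prod ↔
      ∀ d ∈ ds, Disjoint a d := by
  induction ds with
  | nil => simp [isRelPrime_one_right]
  | cons b ds ih =>
    rw [List.map_cons, List.prod_cons, IsRelPrime.mul_right_iff, ih, isRelPrime_monomial_one_iff,
      List.forall_mem_cons]

theorem squarefree_prod_map_monomial_iff [UniqueFactorizationMonoid R] {ds : List (σ →₀ ℕ)} :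
    Squarefree (ds.map (monomial · (1 : R))).prod ↔
      (∀ d ∈ ds, Squarefree (monomial d (1 : R))) ∧ ds.Pairwise Disjoint := by
  induction ds with
  | nil => simp
  | cons a ds ih =>
    rw [List.map_cons, List.prod_cons, squarefree_mul_iff,
      isRelPrime_monomial_prod_map_monomial_iff, List.forall_mem_cons, List.pairwise_cons]
    tauto

end Squarefree

end Monomials

section SquarefreePowers

open RingTheory.Sequence

variable {K σ : Type*} [Field K]

theorem length_le_card_of_isRegular [Finite σ] {M : Type*} [AddCommGroup M]
    [Module (MvPolynomial σ K) M] [Module.Finite (MvPolynomial σ K) M]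
    {l : List (MvPolynomial σ K)} (h : IsRegular M l) : l.length ≤ Nat.card σ := by
  have hle := (length_le_supportDim_of_isRegular h).trans (Module.supportDim_le_ringKrullDim _ M)
  rw [ringKrullDim_of_isNoetherianRing, ringKrullDim_eq_zero_of_field, zero_add] at hle
  exact_mod_cast hle

theorem exists_eq_map_monomial {l : List (MvPolynomial σ K)} (h : ∀ f ∈ l, IsMonomial K f) :
    ∃ ds : List (σ →₀ ℕ), l = ds.map (monomial · 1) := by
  have hl : l ∈ Set.range (List.map (monomial · (1 : K))) := by
    rw [Set.range_list_map]
    exact fun f hf => (h f hf).imp fun _ => Eq.symm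
  exact hl.imp fun _ => Eq.symm

theorem monomial_mem_minGens_iff {I : Ideal (MvPolynomial σ K)} {w : σ →₀ ℕ} :
    monomial w 1 ∈ minGens K I ↔ Minimal (fun d => monomial d (1 : K) ∈ I) w := by
  constructor
  · rintro ⟨-, hw, hmin⟩
    refine ⟨hw, fun d hd hdw => (monomial_left_injective (one_ne_zero' K) ?_).ge⟩
    exact hmin _ ⟨d, rfl⟩ hd (monomial_one_dvd_monomial_one.2 hdw)
  · refine fun hw => ⟨⟨w, rfl⟩, hw.prop, ?_⟩
    rintro _ ⟨d, rfl⟩ hd hdw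
    rw [hw.eq_of_le hd (monomial_one_dvd_monomial_one.1 hdw)]

theorem exists_le_monomial_mem_minGens {I : Ideal (MvPolynomial σ K)} {d : σ →₀ ℕ}
    (hd : monomial d 1 ∈ I) : ∃ w ≤ d, monomial w 1 ∈ minGens K I := by
  simp only [monomial_mem_minGens_iff]
  exact exists_minimal_le_of_wellFoundedLT _ d hd

theorem ne_zero_of_monomial_mem {I : Ideal (MvPolynomial σ K)} (hI : I ≠ ⊤) {d : σ →₀ ℕ}
    (hd : monomial d 1 ∈ I) : d ≠ 0 := by
  rintro rfl
  exact hI ((Ideal.eq_top_iff_one I).2 hd)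

theorem isRegular_map_monomial_iff {I : Ideal (MvPolynomial σ K)} (hI : I ≠ ⊤)
    {ds : List (σ →₀ ℕ)} (hds : ∀ d ∈ ds, monomial d 1 ∈ I) :
    IsRegular (MvPolynomial σ K) (ds.map (monomial · (1 : K))) ↔ ds.Pairwise Disjoint := by
  rw [RingTheory.Sequence.isRegular_iff, isWeaklyRegular_map_monomial_iff fun h₀ =>
    ne_zero_of_monomial_mem hI (hds 0 h₀) rfl, and_iff_left]
  have hle : Ideal.ofList (ds.map (monomial · (1 : K))) ≤ I :=
    Ideal.span_le.2 <| List.forall_mem_map.2 hds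
  rw [smul_eq_mul, Ideal.mul_top]
  exact (ne_top_of_le_ne_top hI hle).symm

theorem le_monNu_iff [Finite σ] {I : Ideal (MvPolynomial σ K)} (hI : I ≠ ⊤) {k : ℕ} :
    k ≤ monNu K I ↔ ∃ ds : List (σ →₀ ℕ), ds.length = k ∧ (∀ d ∈ ds, monomial d 1 ∈ I) ∧
      ds.Pairwise Disjoint := by
  let lengths : Set ℕ := {m | ∃ l : List (MvPolynomial σ K), l.length = m ∧
    (∀ f ∈ l, IsMonomial K f ∧ f ∈ I) ∧ IsRegular (MvPolynomial σ K) l}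
  have hbdd : BddAbove lengths := by
    refine ⟨Nat.card σ, ?_⟩
    rintro _ ⟨l, rfl, -, hl⟩
    exact length_le_card_of_isRegular hl
  have hne : lengths.Nonempty := ⟨0, [], rfl, by simp, .nil _ _⟩
  constructor
  · intro hk
    obtain ⟨l, hlen, hl, hreg⟩ := Nat.sSup_mem hne hbdd
    obtain ⟨ds, rfl⟩ := exists_eq_map_monomial fun f hf => (hl f hf).1
    have hds : ∀ d ∈ ds, monomial d 1 ∈ I := fun d hd => (hl _ (List.mem_map_of_mem hd)).2
    rw [List.length_map] at hlen
    exact ⟨ds.take k, List.length_take_of_le (hlen ▸ hk),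
      fun d hd => hds d (List.mem_of_mem_take hd),
      ((isRegular_map_monomial_iff hI hds).1 hreg).sublist (List.take_sublist k ds)⟩
  · rintro ⟨ds, rfl, hds, hdisj⟩
    refine le_csSup hbdd ⟨_, List.length_map _, ?_, (isRegular_map_monomial_iff hI hds).2 hdisj⟩
    exact List.forall_mem_map.2 fun d hd => ⟨⟨d, rfl⟩, hds d hd⟩

theorem sqPow_eq_span_monomial (I : Ideal (MvPolynomial σ K)) (k : ℕ) :
    sqPow K I k = Ideal.span ((monomial · 1) '' {d | Squarefree (monomial d (1 : K)) ∧
      ∃ ds : List (σ →₀ ℕ), ds.length = k ∧ (∀ d ∈ ds, monomial d 1 ∈ minGens K I) ∧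
        ds.sum = d}) := by
  rw [sqPow]
  congr 1
  ext u
  constructor
  · rintro ⟨hu, l, rfl, hl, rfl⟩
    obtain ⟨ds, rfl⟩ := exists_eq_map_monomial fun f hf => (hl f hf).1
    rw [prod_map_monomial_one] at hu ⊢
    exact ⟨ds.sum, ⟨hu, ds, (List.length_map _).symm, List.forall_mem_map.1 hl, rfl⟩, rfl⟩
  · rintro ⟨_, ⟨hu, ds, rfl, hds, rfl⟩, rfl⟩
    exact ⟨hu, ds.map (monomial · 1), List.length_map _, List.forall_mem_map.2 hds,
      (prod_map_monomial_one ds).symm⟩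

theorem sqPow_ne_bot_iff {I : Ideal (MvPolynomial σ K)} (hI : ∀ u ∈ minGens K I, Squarefree u)
    {k : ℕ} :
    sqPow K I k ≠ ⊥ ↔ ∃ ds : List (σ →₀ ℕ), ds.length = k ∧
      (∀ d ∈ ds, monomial d 1 ∈ minGens K I) ∧ ds.Pairwise Disjoint := by
  rw [sqPow_eq_span_monomial, Ne, Ideal.span_eq_bot, Set.forall_mem_image, not_forall]
  constructor
  · rintro ⟨_, h⟩
    obtain ⟨⟨hsq, ds, hlen, hds, rfl⟩, -⟩ := Classical.not_imp.1 h
    rw [← prod_map_monomial_one, squarefree_prod_map_monomial_iff] at hsq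
    exact ⟨ds, hlen, hds, hsq.2⟩
  · rintro ⟨ds, hlen, hds, hdisj⟩
    have hsq := squarefree_prod_map_monomial_iff.2 ⟨fun d hd => hI _ (hds d hd), hdisj⟩
    rw [prod_map_monomial_one] at hsq
    exact ⟨ds.sum, Classical.not_imp.2 ⟨⟨hsq, ds, hlen, hds, rfl⟩, hsq.ne_zero⟩⟩

theorem sqPow_eq_bot_iff [Finite σ] {I : Ideal (MvPolynomial σ K)}
    (hI : ∀ u ∈ minGens K I, Squarefree u) (hI' : I ≠ ⊤) {k : ℕ} :
    sqPow K I k = ⊥ ↔ monNu K I < k := by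
  rw [← not_iff_not, not_lt, le_monNu_iff hI', ← Ne, sqPow_ne_bot_iff hI]
  constructor
  · rintro ⟨ds, hlen, hds, hdisj⟩
    exact ⟨ds, hlen, fun d hd => (hds d hd).2.1, hdisj⟩
  · rintro ⟨ds, hlen, hds, hdisj⟩
    choose! w hle hmem using fun d hd => exists_le_monomial_mem_minGens (hds d hd)
    refine ⟨ds.map w, by rwa [List.length_map], List.forall_mem_map.2 hmem, ?_⟩
    exact List.pairwise_map.2 <| hdisj.imp_of_mem fun ha hb hab => hab.mono (hle _ ha) (hle _ hb)

end SquarefreePowers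

section Depth

open RingTheory.Sequence

variable {K σ : Type*} [Field K]

theorem minDeg_le_degree_of_monomial_mem {J : Ideal (MvPolynomial σ K)} {d : σ →₀ ℕ}
    (hd : monomial d 1 ∈ J) : minDeg K J ≤ d.degree := by
  obtain ⟨w, hwd, hw⟩ := exists_le_monomial_mem_minGens hd
  calc minDeg K J ≤ totalDegree (monomial w (1 : K)) := Nat.sInf_le (Set.mem_image_of_mem _ hw)
    _ = w.degree := totalDegree_monomial w one_ne_zero
    _ ≤ d.degree := Finsupp.degree_mono hwd

theorem minDeg_stanleyReisnerIdeal_le_card {N : UpperSet (Finset σ)} {F : Finset σ} (hF : F ∈ N) :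
    minDeg K (stanleyReisnerIdeal K N) ≤ F.card := by
  classical
  have hmem : monomial (Multiset.toFinsupp F.val) 1 ∈ stanleyReisnerIdeal K N := by
    rw [monomial_mem_stanleyReisnerIdeal]
    simpa using hF
  exact (minDeg_le_degree_of_monomial_mem hmem).trans_eq (Multiset.toFinsupp_sum_eq F.val)

theorem le_qdepth_of_isRegular [Finite σ] {J : Ideal (MvPolynomial σ K)}
    {l : List (MvPolynomial σ K)} (hl : ∀ f ∈ l, f ∈ idealOfVars σ K)
    (hreg : IsRegular (MvPolynomial σ K ⧸ J) l) : l.length ≤ qdepth K J := by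
  refine le_csSup ⟨Nat.card σ, ?_⟩ ⟨l, rfl, hl, hreg⟩
  rintro _ ⟨l', rfl, -, hl'⟩
  exact length_le_card_of_isRegular hl'

theorem minDeg_sub_one_le_qdepth_stanleyReisnerIdeal [Finite σ] (N : UpperSet (Finset σ)) :
    minDeg K (stanleyReisnerIdeal K N) - 1 ≤ qdepth K (stanleyReisnerIdeal K N) := by
  classical
  have := Fintype.ofFinite σ
  set d := minDeg K (stanleyReisnerIdeal K N)
  obtain hzero | hpos := d.eq_zero_or_pos
  · simp [hzero]
  have hN : ∀ F ∈ N, d - 1 < F.card := fun F hF =>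
    (Nat.sub_one_lt_of_lt hpos).trans_le (minDeg_stanleyReisnerIdeal_le_card hF)
  have hcard : d - 1 ≤ Fintype.card σ := by
    obtain ⟨_, _, ⟨⟨e, rfl⟩, he, -⟩, -⟩ := Nat.nonempty_of_pos_sInf hpos
    exact ((hN _ (monomial_mem_stanleyReisnerIdeal.1 he)).trans_le (Finset.card_le_univ _)).le
  have hempty : ∅ ∉ N := fun h => by simpa using hN ∅ h
  have hvars : ∀ f ∈ hsymmSeq σ K 1 (d - 1), f ∈ idealOfVars σ K :=
    fun _ => mem_idealOfVars_of_mem_hsymmSeq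
  have hreg := isRegular_quotient_of_le idealOfVars_ne_top
    (stanleyReisnerIdeal_le_idealOfVars hempty) hvars
    (isWeaklyRegular_stanleyReisnerIdeal_hsymmSeq 0 hcard hN)
  simpa only [length_hsymmSeq] using le_qdepth_of_isRegular hvars hreg

theorem minDeg_sub_one_le_qdepth_sqPow [Finite σ] (I : Ideal (MvPolynomial σ K)) (k : ℕ) :
    minDeg K (sqPow K I k) - 1 ≤ qdepth K (sqPow K I k) := by
  rw [sqPow_eq_span_monomial, span_monomial_eq_stanleyReisnerIdeal fun _ he =>
    apply_le_one_of_squarefree_monomial he.1]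
  exact minDeg_sub_one_le_qdepth_stanleyReisnerIdeal _

end Depth

theorem sqPow_eq_bot_iff_and_depth_ge_general {K σ : Type*} [Field K] [Finite σ]
    (I : Ideal (MvPolynomial σ K)) (hI : ∀ u ∈ minGens K I, Squarefree u) (hproper : I ≠ ⊤) :
    (∀ k : ℕ, sqPow K I k = ⊥ ↔ monNu K I < k) ∧
    (∀ k : ℕ, 1 ≤ k → k ≤ monNu K I →
      minDeg K (sqPow K I k) - 1 ≤ qdepth K (sqPow K I k)) :=
  ⟨fun _ => sqPow_eq_bot_iff hI hproper, fun k _ _ => minDeg_sub_one_le_qdepth_sqPow I k⟩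

/-- For a (proper) squarefree monomial ideal `I ⊂ S`:
(a) `I^{[k]} = 0` iff `k > ν(I)`; and (b) for `1 ≤ k ≤ ν(I)` one has
`depth(S/I^{[k]}) ≥ d_k − 1`, i.e. `g_I(k) ≥ 0`. -/
theorem sqPow_eq_bot_iff_and_depth_ge {K : Type*} [Field K] {n : ℕ}
    (I : Ideal (MvPolynomial (Fin n) K))
    (hI : IsSqfreeMonomialIdeal K I) (hproper : I ≠ ⊤) :
    (∀ k : ℕ, 1 ≤ k → (sqPow K I k = ⊥ ↔ monNu K I < k)) ∧
    (∀ k : ℕ, 1 ≤ k → k ≤ monNu K I →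
      minDeg K (sqPow K I k) - 1 ≤ qdepth K (sqPow K I k)) :=
  have h := sqPow_eq_bot_iff_and_depth_ge_general I hI.2 hproper
  ⟨fun k _ => h.1 k, h.2⟩
end

section
/- Let I ⊆ J ⊆ S = K[x_1,…,x_n] be squarefree monomial ideals, and suppose that I^{[k]} = J^{[k]} for some positive integer k. Then I^{[ℓ]} = J^{[ℓ]} for all ℓ ≥ k. -/
open MvPolynomial

/-!
A squarefree monomial lies in `I^{[k+1]}` exactly when a product `a * b` of a monomial `a ∈ I` and a
monomial `b ∈ I^{[k]}` divides it. Suppose `I ≤ J` and `I^{[k]} = J^{[k]}` with `k ≥ 1`, and let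
`v * p` be a generator of `J^{[k+1]}` with `v ∈ J` and `p ∈ J^{[k]} = I^{[k]}`. Some `a * w` with
`a ∈ I` and `w ∈ I^{[k-1]}` divides `p`. Exchanging factors, `v * w` lies in `J^{[k]} = I^{[k]}`, so
`a * (v * w)`, which divides `v * p`, lies in `I^{[k+1]}`.
-/

section SquarefreePowers

variable {K : Type*} [Field K] {σ : Type*}

lemma isMonomial_one : IsMonomial K (1 : MvPolynomial σ K) :=
  ⟨0, rfl⟩

lemma IsMonomial.mul {u v : MvPolynomial σ K} (hu : IsMonomial K u) (hv : IsMonomial K v) :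
    IsMonomial K (u * v) := by
  obtain ⟨d, rfl⟩ := hu
  obtain ⟨e, rfl⟩ := hv
  exact ⟨d + e, by rw [monomial_mul, one_mul]⟩

lemma isMonomial_list_prod {l : List (MvPolynomial σ K)} (hl : ∀ f ∈ l, IsMonomial K f) :
    IsMonomial K l.prod :=
  l.prod_induction (IsMonomial K) (fun _ _ => IsMonomial.mul) isMonomial_one hl

lemma exists_dvd_of_mem_span_of_isMonomial {A : Set (MvPolynomial σ K)}
    (hA : ∀ a ∈ A, IsMonomial K a) {u : MvPolynomial σ K} (hu : IsMonomial K u)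
    (huA : u ∈ Ideal.span A) : ∃ a ∈ A, a ∣ u := by
  obtain ⟨d, rfl⟩ := hu
  have hA_range : A ⊆ Set.range fun e : σ →₀ ℕ => monomial e (1 : K) := fun a ha =>
    (hA a ha).imp fun _ => Eq.symm
  obtain ⟨E, rfl⟩ := Set.subset_range_iff_exists_image_eq.1 hA_range
  obtain ⟨e, he, hed⟩ := mem_ideal_span_monomial_image.1 huA d (by classical simp)
  exact ⟨_, Set.mem_image_of_mem _ he, monomial_one_dvd_monomial_one.2 hed⟩

lemma exists_mem_minGens_dvd {I : Ideal (MvPolynomial σ K)} {u : MvPolynomial σ K}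
    (hu : IsMonomial K u) (huI : u ∈ I) : ∃ v ∈ minGens K I, v ∣ u := by
  obtain ⟨d, rfl⟩ := hu
  obtain ⟨e, hed, heI, he_min⟩ :=
    exists_minimal_le_of_wellFoundedLT (fun e => monomial e (1 : K) ∈ I) d huI
  refine ⟨monomial e 1, ⟨⟨e, rfl⟩, heI, ?_⟩, monomial_one_dvd_monomial_one.2 hed⟩
  rintro _ ⟨c, rfl⟩ hcI hce
  have hce : c ≤ e := monomial_one_dvd_monomial_one.1 hce
  rw [hce.antisymm (he_min hcI hce)]

lemma exists_list_minGens_prod_dvd_of_mem_sqPow {I : Ideal (MvPolynomial σ K)} {k : ℕ}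
    {u : MvPolynomial σ K} (hu : IsMonomial K u) (huI : u ∈ sqPow K I k) :
    ∃ l : List (MvPolynomial σ K),
      l.length = k ∧ (∀ f ∈ l, f ∈ minGens K I) ∧ l.prod ∣ u := by
  have h_gens : ∀ g ∈ {g | Squarefree g ∧ ∃ l : List (MvPolynomial σ K),
      l.length = k ∧ (∀ f ∈ l, f ∈ minGens K I) ∧ g = l.prod}, IsMonomial K g := by
    rintro _ ⟨-, l, -, hl, rfl⟩
    exact isMonomial_list_prod fun f hf => (hl f hf).1
  obtain ⟨_, ⟨-, l, hlk, hl, rfl⟩, hlu⟩ := exists_dvd_of_mem_span_of_isMonomial h_gens hu huI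
  exact ⟨l, hlk, hl, hlu⟩

lemma sqPow_zero (I : Ideal (MvPolynomial σ K)) : sqPow K I 0 = ⊤ :=
  (Ideal.eq_top_iff_one _).2 (Ideal.subset_span ⟨squarefree_one, [], by simp⟩)

lemma mul_mem_sqPow_succ {I : Ideal (MvPolynomial σ K)} {k : ℕ} {a b : MvPolynomial σ K}
    (ha : IsMonomial K a) (haI : a ∈ I) (hb : IsMonomial K b) (hbI : b ∈ sqPow K I k)
    (hab : Squarefree (a * b)) : a * b ∈ sqPow K I (k + 1) := by
  obtain ⟨v, hv, hva⟩ := exists_mem_minGens_dvd ha haI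
  obtain ⟨l, rfl, hl, hlb⟩ := exists_list_minGens_prod_dvd_of_mem_sqPow hb hbI
  have h_dvd : (v :: l).prod ∣ a * b := by
    rw [List.prod_cons]
    exact mul_dvd_mul hva hlb
  exact Ideal.mem_of_dvd _ h_dvd <| Ideal.subset_span
    ⟨hab.squarefree_of_dvd h_dvd, v :: l, rfl, List.forall_mem_cons.2 ⟨hv, hl⟩, rfl⟩

lemma sqPow_succ (I : Ideal (MvPolynomial σ K)) (k : ℕ) :
    sqPow K I (k + 1) = Ideal.span {u | Squarefree u ∧ ∃ a b, IsMonomial K a ∧ a ∈ I ∧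
      IsMonomial K b ∧ b ∈ sqPow K I k ∧ u = a * b} := by
  apply le_antisymm <;> refine Ideal.span_le.2 ?_
  · rintro _ ⟨hs, l, hlk, hl, rfl⟩
    obtain ⟨v, l, rfl⟩ := List.exists_cons_of_length_eq_add_one hlk
    obtain ⟨hv, hl⟩ := List.forall_mem_cons.1 hl
    rw [List.prod_cons] at hs ⊢
    have hl_mem : l.prod ∈ sqPow K I k := Ideal.subset_span
      ⟨hs.squarefree_of_dvd (dvd_mul_left _ _), l, Nat.succ_injective hlk, hl, rfl⟩
    exact Ideal.subset_span ⟨hs, v, l.prod, hv.1, hv.2.1,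
      isMonomial_list_prod fun f hf => (hl f hf).1, hl_mem, rfl⟩
  · rintro _ ⟨hs, a, b, ha, haI, hb, hbI, rfl⟩
    exact mul_mem_sqPow_succ ha haI hb hbI hs

lemma exists_mul_dvd_of_mem_sqPow_succ {I : Ideal (MvPolynomial σ K)} {k : ℕ}
    {u : MvPolynomial σ K} (hu : IsMonomial K u) (huI : u ∈ sqPow K I (k + 1)) :
    ∃ a b, IsMonomial K a ∧ a ∈ I ∧ IsMonomial K b ∧ b ∈ sqPow K I k ∧ a * b ∣ u := by
  rw [sqPow_succ] at huI
  obtain ⟨_, ⟨-, a, b, ha, haI, hb, hbI, rfl⟩, hab⟩ := exists_dvd_of_mem_span_of_isMonomial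
    (by rintro _ ⟨-, a, b, ha, -, hb, -, rfl⟩; exact ha.mul hb) hu huI
  exact ⟨a, b, ha, haI, hb, hbI, hab⟩

lemma sqPow_mono {I J : Ideal (MvPolynomial σ K)} (hIJ : I ≤ J) (k : ℕ) :
    sqPow K I k ≤ sqPow K J k := by
  induction k with
  | zero => rw [sqPow_zero, sqPow_zero]
  | succ k ih =>
    rw [sqPow_succ I, Ideal.span_le]
    rintro _ ⟨hs, a, b, ha, haI, hb, hbI, rfl⟩
    exact mul_mem_sqPow_succ ha (hIJ haI) hb (ih hbI) hs

lemma sqPow_succ_eq_of_sqPow_eq {I J : Ideal (MvPolynomial σ K)} (hIJ : I ≤ J) {k : ℕ}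
    (hk : 1 ≤ k) (h : sqPow K I k = sqPow K J k) :
    sqPow K I (k + 1) = sqPow K J (k + 1) := by
  obtain ⟨k, rfl⟩ := Nat.exists_eq_add_of_le' hk
  refine (sqPow_mono hIJ _).antisymm ?_
  rw [sqPow_succ J, Ideal.span_le]
  rintro _ ⟨hs, v, p, hv, hvJ, hp, hpJ, rfl⟩
  obtain ⟨a, w, ha, haI, hw, hwI, haw⟩ := exists_mul_dvd_of_mem_sqPow_succ hp (h ▸ hpJ)
  have h_exchange : a * (v * w) ∣ v * p := mul_left_comm v a w ▸ mul_dvd_mul_left v haw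
  have hs_exchange : Squarefree (a * (v * w)) := hs.squarefree_of_dvd h_exchange
  have hvw : v * w ∈ sqPow K J (k + 1) := mul_mem_sqPow_succ hv hvJ hw (sqPow_mono hIJ k hwI)
    (hs_exchange.squarefree_of_dvd (dvd_mul_left _ _))
  exact Ideal.mem_of_dvd _ h_exchange
    (mul_mem_sqPow_succ ha haI (hv.mul hw) (h ▸ hvw) hs_exchange)

theorem sqPow_eq_of_sqPow_eq_general {I J : Ideal (MvPolynomial σ K)} (hIJ : I ≤ J) {k l : ℕ}
    (hk : 1 ≤ k) (hkl : k ≤ l) (h : sqPow K I k = sqPow K J k) :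
    sqPow K I l = sqPow K J l := by
  induction l, hkl using Nat.le_induction with
  | base => exact h
  | succ m hkm ih => exact sqPow_succ_eq_of_sqPow_eq hIJ (hk.trans hkm) ih

end SquarefreePowers

/-- If `I ⊆ J` are squarefree monomial ideals with
`I^{[k]} = J^{[k]}` for some positive integer `k`, then `I^{[ℓ]} = J^{[ℓ]}`
for all `ℓ ≥ k`. -/
theorem sqPow_eq_of_sqPow_eq {K : Type*} [Field K] {n : ℕ}
    (I J : Ideal (MvPolynomial (Fin n) K))
    (hI : IsSqfreeMonomialIdeal K I) (hJ : IsSqfreeMonomialIdeal K J)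
    (hIJ : I ≤ J) (k : ℕ) (hk : 1 ≤ k) (h : sqPow K I k = sqPow K J k) :
    ∀ l : ℕ, k ≤ l → sqPow K I l = sqPow K J l :=
  fun _ hkl => sqPow_eq_of_sqPow_eq_general hIJ hk hkl h
end

section
/- Let I ⊂ S = K[x_1,…,x_n] be a matroidal ideal generated in degree d with supp(I) = [n] (every variable divides some minimal generator). Then depth(S/I) = d − 1. -/
open MvPolynomial

/-!
By Rees, the depth of `S ⧸ I` is the least `i` with `Ext (S ⧸ 𝔪) (S ⧸ I) i ≠ 0`.

The supports of the minimal generators of a matroidal ideal are the bases of a matroid on the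
variables, loopless when every variable occurs. For a flat `G` and a set `A` of variables let
`J(G, A)` be the ideal of the monomials whose support meets `A` or spans together with `G`; the
matroidal ideal itself is `J(∅, ∅)`. If the complement of `A` spans together with `G`, and `G` has
corank `k + 1`, then `S ⧸ J(G, A)` has depth `k + |G \ A|`. For `k = 0` the ideal `J(G, A)` is
generated by the variables outside `G \ A`. Otherwise take `e ∉ G ∪ A` and put `G' = cl(G ∪ {e})`,
`A' = A ∪ (G' \ G)`. Since `cl(G ∪ {f}) = G'` for every `f ∈ G' \ G`,

  `J(G, A) = J(G', A) ∩ J(G, A')`,  `J(G', A) + J(G, A') = J(G', A')`,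

and the depth follows by induction from the long exact `Ext` sequence of
`0 → S ⧸ (p ∩ q) → S ⧸ p × S ⧸ q → S ⧸ (p + q) → 0`. If the complement of `A'` no longer spans
together with `G`, then `J(G, A')` is generated by the variables in `A'` and its depth is read off.
-/

section ExtGrade

open CategoryTheory Abelian

universe w v u

variable {C : Type u} [Category.{v} C] [Abelian C] [HasExt.{w} C] {N M : C} {n : ℕ}

/-- The grade of the pair `(N, M)`: the least `i` with `Ext N M i ≠ 0`, or `⊤` if there is none. -/
@[irreducible]
noncomputable def extGrade (N M : C) : ℕ∞ :=
  ⨅ (i : ℕ) (_ : Nontrivial (Ext N M i)), (i : ℕ∞)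

lemma natCast_le_extGrade_iff :
    (n : ℕ∞) ≤ extGrade N M ↔ ∀ i < n, Subsingleton (Ext N M i) := by
  simp only [extGrade, le_iInf_iff, Nat.cast_le, ← not_nontrivial_iff_subsingleton]
  exact forall_congr' fun i => by rw [← not_lt, imp_not_comm]

lemma extGrade_eq_zero_iff : extGrade N M = 0 ↔ Nontrivial (N ⟶ M) := by
  rw [← Ext.homEquiv₀.nontrivial_congr, ← not_iff_not, not_nontrivial_iff_subsingleton,
    ← ne_eq, ← Order.one_le_iff_ne_zero, ← Nat.cast_one, natCast_le_extGrade_iff]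
  simp only [Nat.lt_one_iff, forall_eq]

variable {S : ShortComplex C} (hS : S.ShortExact)

include hS

lemma ext_eq_zero_of_comp_mk₀_eq_zero {i : ℕ} (hi : i < extGrade N S.X₃ + 1) (x : Ext N S.X₁ i)
    (hx : x.comp (Ext.mk₀ S.f) (add_zero i) = 0) : x = 0 := by
  cases i with
  | zero =>
    have := hS.mono_f
    exact Ext.postcomp_mk₀_injective_of_mono N S.f (by simpa using hx)
  | succ i =>
    have hi' : ((i + 1 : ℕ) : ℕ∞) ≤ extGrade N S.X₃ := Order.le_of_lt_add_one hi
    have := natCast_le_extGrade_iff.1 hi' i i.lt_succ_self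
    obtain ⟨y, rfl⟩ := Ext.covariant_sequence_exact₁ N hS x hx rfl
    rw [Subsingleton.elim y 0, Ext.zero_comp]

lemma min_extGrade_le_extGrade_X₁ :
    min (extGrade N S.X₂) (extGrade N S.X₃ + 1) ≤ extGrade N S.X₁ := by
  refine ENat.forall_natCast_le_iff_le.1 fun n hn => natCast_le_extGrade_iff.2 fun i hi => ?_
  have := natCast_le_extGrade_iff.1 (hn.trans (min_le_left _ _)) i hi
  have hi₃ : i < extGrade N S.X₃ + 1 :=
    (Nat.cast_lt.2 hi).trans_le (hn.trans (min_le_right _ _))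
  exact subsingleton_of_forall_eq 0 fun x =>
    ext_eq_zero_of_comp_mk₀_eq_zero hS hi₃ x (Subsingleton.elim _ _)

lemma min_extGrade_le_extGrade_X₂ :
    min (extGrade N S.X₁) (extGrade N S.X₃) ≤ extGrade N S.X₂ := by
  refine ENat.forall_natCast_le_iff_le.1 fun n hn => natCast_le_extGrade_iff.2 fun i hi => ?_
  have := natCast_le_extGrade_iff.1 (hn.trans (min_le_left _ _)) i hi
  have := natCast_le_extGrade_iff.1 (hn.trans (min_le_right _ _)) i hi
  refine subsingleton_of_forall_eq 0 fun x => ?_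
  obtain ⟨y, rfl⟩ := Ext.covariant_sequence_exact₂ N hS x (Subsingleton.elim _ _)
  rw [Subsingleton.elim y 0, Ext.zero_comp]

lemma min_extGrade_le_extGrade_X₃_add_one :
    min (extGrade N S.X₁) (extGrade N S.X₂ + 1) ≤ extGrade N S.X₃ + 1 := by
  refine ENat.forall_natCast_le_iff_le.1 fun n hn => ?_
  obtain _ | n := n
  · simp
  have hX₁ := natCast_le_extGrade_iff.1 (hn.trans (min_le_left _ _))
  have hX₂ := natCast_le_extGrade_iff.1 <|
    (ENat.add_le_add_iff_right ENat.one_ne_top).1 (hn.trans (min_le_right _ _))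
  refine add_le_add_left (natCast_le_extGrade_iff.2 fun i hi => ?_) 1
  have := hX₁ (i + 1) (by lia)
  have := hX₂ i hi
  refine subsingleton_of_forall_eq 0 fun x => ?_
  obtain ⟨y, rfl⟩ := Ext.covariant_sequence_exact₃ N hS x rfl (Subsingleton.elim _ _)
  rw [Subsingleton.elim y 0, Ext.zero_comp]

lemma extGrade_X₁_eq_add_one (h : extGrade N S.X₃ + 1 ≤ extGrade N S.X₂) :
    extGrade N S.X₁ = extGrade N S.X₃ + 1 := by
  refine le_antisymm ?_ ((le_min h le_rfl).trans (min_extGrade_le_extGrade_X₁ hS))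
  obtain htop | htop := eq_or_ne (extGrade N S.X₃) ⊤
  · simp [htop]
  have hlt : extGrade N S.X₃ + 1 < extGrade N S.X₂ + 1 :=
    (ENat.add_lt_add_iff_right ENat.one_ne_top).2 (((ENat.lt_add_one_iff htop).2 le_rfl).trans_le h)
  exact (min_le_iff.1 (min_extGrade_le_extGrade_X₃_add_one hS)).resolve_right hlt.not_ge

end ExtGrade

section IdealGrade

open CategoryTheory Abelian

universe u

variable {R : Type u} [CommRing R] (𝔞 : Ideal R)

/-- The grade of the ideal `𝔞` on `M`, in its homological description: the least `i` with
`Ext (R ⧸ 𝔞) M i ≠ 0`. -/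
noncomputable def idealGrade (M : Type u) [AddCommGroup M] [Module R M] : ℕ∞ :=
  extGrade (ModuleCat.of R (R ⧸ 𝔞)) (ModuleCat.of R M)

variable {𝔞}

lemma annihilator_sup_annihilator_le_annihilator_ext (N M : ModuleCat.{u} R) (i : ℕ) :
    Module.annihilator R N ⊔ Module.annihilator R M ≤ Module.annihilator R (Ext N M i) := by
  have smul_id_eq_zero (L : ModuleCat.{u} R) (b : R) (hb : b ∈ Module.annihilator R L) :
      b • 𝟙 L = 0 := by
    simp [← ModuleCat.lsmul_eq_smul_id, Module.mem_annihilator_iff_lsmul_eq_zero.1 hb]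
  refine sup_le (fun b hb => Module.mem_annihilator.2 fun x => ?_)
    (fun b hb => Module.mem_annihilator.2 fun x => ?_)
  · rw [← Ext.mk₀_id_comp x, ← Ext.smul_comp, ← Ext.mk₀_smul, smul_id_eq_zero N b hb, Ext.mk₀_zero,
      Ext.zero_comp]
  · rw [← Ext.comp_mk₀_id x, ← Ext.comp_smul, ← Ext.mk₀_smul, smul_id_eq_zero M b hb, Ext.mk₀_zero,
      Ext.comp_zero]

variable {M M' : Type u} [AddCommGroup M] [Module R M] [AddCommGroup M'] [Module R M']

lemma idealGrade_quotient_self (h : 𝔞 ≠ ⊤) : idealGrade 𝔞 (R ⧸ 𝔞) = 0 := by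
  have : Nontrivial (R ⧸ 𝔞) := Ideal.Quotient.nontrivial_iff.2 h
  rw [idealGrade, extGrade_eq_zero_iff]
  exact ModuleCat.homEquiv.nontrivial

lemma min_idealGrade_le_idealGrade_prod :
    min (idealGrade 𝔞 M) (idealGrade 𝔞 M') ≤ idealGrade 𝔞 (M × M') :=
  min_extGrade_le_extGrade_X₂ (ModuleCat.shortComplex_shortExact
    (ModuleCat.shortComplexOfCompEqZero (.inl R M M') (.snd R M M') (LinearMap.snd_comp_inl ..))
    .inl_snd LinearMap.inl_injective LinearMap.snd_surjective)

lemma idealGrade_congr (e : M ≃ₗ[R] M') : idealGrade 𝔞 M = idealGrade 𝔞 M' := by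
  refine ENat.eq_of_forall_natCast_le_iff fun n => ?_
  simp only [idealGrade, natCast_le_extGrade_iff]
  exact forall₂_congr fun i _ =>
    ((extFunctorObj _ i).mapIso e.toModuleIso).addCommGroupIsoToAddEquiv.subsingleton_congr

lemma idealGrade_eq_idealGrade_quotSMulTop_add_one {a : R} (ha : a ∈ 𝔞)
    (hreg : IsSMulRegular M a) :
    idealGrade 𝔞 M = idealGrade 𝔞 (QuotSMulTop a M) + 1 := by
  have hS := hreg.smulShortComplex_shortExact (M := ModuleCat.of R M)
  refine extGrade_X₁_eq_add_one hS ?_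
  have comp_smul_eq_zero {i : ℕ} (x : Ext (ModuleCat.of R (R ⧸ 𝔞)) (ModuleCat.of R M) i) :
      x.comp (Ext.mk₀ (a • 𝟙 (ModuleCat.of R M))) (add_zero i) = 0 := by
    rw [Ext.mk₀_smul, Ext.comp_smul, Ext.comp_mk₀_id]
    refine Module.mem_annihilator.1 (annihilator_sup_annihilator_le_annihilator_ext _ _ i ?_) x
    exact Ideal.mem_sup_left (by rwa [Ideal.annihilator_quotient])
  refine ENat.forall_natCast_le_iff_le.1 fun n hn => natCast_le_extGrade_iff.2 fun i hi => ?_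
  exact subsingleton_of_forall_eq 0 fun x => ext_eq_zero_of_comp_mk₀_eq_zero hS
    ((Nat.cast_lt.2 hi).trans_le hn) x (comp_smul_eq_zero x)

open scoped Pointwise in
lemma idealGrade_quotient_eq_idealGrade_quotient_sup_add_one {p : Submodule R M} {a : R}
    (ha : a ∈ 𝔞) (hreg : IsSMulRegular (M ⧸ p) a) :
    idealGrade 𝔞 (M ⧸ p) = idealGrade 𝔞 (M ⧸ p ⊔ a • (⊤ : Submodule R M)) + 1 := by
  have hmap : a • (⊤ : Submodule R (M ⧸ p)) = (a • (⊤ : Submodule R M)).map p.mkQ := by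
    rw [Submodule.map_pointwise_smul, Submodule.map_top, Submodule.range_mkQ]
  rw [idealGrade_eq_idealGrade_quotSMulTop_add_one ha hreg]
  exact congrArg (· + 1) <| idealGrade_congr <| (Submodule.quotEquivOfEq _ _ hmap).trans
    (Submodule.quotientQuotientEquivQuotientSup p _)

lemma exact_factor_prod_factor_coprod (p q : Submodule R M) :
    Function.Exact
      ((Submodule.factor inf_le_left).prod (Submodule.factor inf_le_right) :
        (M ⧸ p ⊓ q) →ₗ[R] (M ⧸ p) × (M ⧸ q))
      ((Submodule.factor le_sup_left).coprod (-Submodule.factor le_sup_right) :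
        (M ⧸ p) × (M ⧸ q) →ₗ[R] M ⧸ p ⊔ q) := by
  rintro ⟨x, y⟩
  induction x using Submodule.Quotient.induction_on with | H x => ?_
  induction y using Submodule.Quotient.induction_on with | H y => ?_
  have hker : x - y ∈ p ⊔ q ↔ ∃ z, z - x ∈ p ∧ z - y ∈ q := by
    rw [Submodule.mem_sup]
    constructor
    · rintro ⟨u, hu, v, hv, huv⟩
      exact ⟨x - u, by simpa using hu, by convert hv using 1; rw [← add_right_inj u, huv]; abel⟩
    · rintro ⟨z, hzx, hzy⟩
      exact ⟨x - z, by simpa using p.neg_mem hzx, z - y, hzy, by abel⟩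
  simp only [Submodule.factor, LinearMap.coprod_apply, LinearMap.neg_apply, ← sub_eq_add_neg,
    Submodule.mapQ_apply, ← Submodule.Quotient.mk_sub, Submodule.Quotient.mk_eq_zero,
    LinearMap.id_apply, hker, Set.mem_range, (Submodule.Quotient.mk_surjective _).exists,
    LinearMap.prod_apply, Function.prod_apply, Prod.mk.injEq, Submodule.Quotient.eq]

lemma idealGrade_quotient_inf_eq_add_one (p q : Submodule R M)
    (hp : idealGrade 𝔞 (M ⧸ p ⊔ q) + 1 ≤ idealGrade 𝔞 (M ⧸ p))
    (hq : idealGrade 𝔞 (M ⧸ p ⊔ q) + 1 ≤ idealGrade 𝔞 (M ⧸ q)) :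
    idealGrade 𝔞 (M ⧸ p ⊓ q) = idealGrade 𝔞 (M ⧸ p ⊔ q) + 1 := by
  let f : (M ⧸ p ⊓ q) →ₗ[R] (M ⧸ p) × (M ⧸ q) :=
    (Submodule.factor inf_le_left).prod (Submodule.factor inf_le_right)
  let g : (M ⧸ p) × (M ⧸ q) →ₗ[R] M ⧸ p ⊔ q :=
    (Submodule.factor le_sup_left).coprod (-Submodule.factor le_sup_right)
  have hf : Function.Injective f := by
    refine (injective_iff_map_eq_zero f).2 fun x => ?_
    induction x using Submodule.Quotient.induction_on with | H x => ?_
    simp [f, Submodule.factor]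
  have hg : Function.Surjective g := fun x =>
    have ⟨y, hy⟩ := Submodule.factor_surjective (le_sup_left : p ≤ p ⊔ q) x
    ⟨(y, 0), by simp [g, hy]⟩
  have hfg := exact_factor_prod_factor_coprod p q
  exact extGrade_X₁_eq_add_one (ModuleCat.shortComplex_shortExact
    (ModuleCat.shortComplexOfCompEqZero f g hfg.linearMap_comp_eq_zero) hfg hf hg)
    ((le_min hp hq).trans min_idealGrade_le_idealGrade_prod)

lemma idealGrade_eq_top_of_sup_annihilator (h : 𝔞 ⊔ Module.annihilator R M = ⊤) :
    idealGrade 𝔞 M = ⊤ := by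
  rw [idealGrade]
  refine ENat.eq_top_iff_forall_ge.2 fun n => natCast_le_extGrade_iff.2 fun i _ => ?_
  have hle := annihilator_sup_annihilator_le_annihilator_ext
    (ModuleCat.of R (R ⧸ 𝔞)) (ModuleCat.of R M) i
  rw [Ideal.annihilator_quotient, h, top_le_iff] at hle
  exact Module.annihilator_eq_top_iff.1 hle

lemma smul_top_lt_top_of_idealGrade_ne_top [Module.Finite R M] (h : idealGrade 𝔞 M ≠ ⊤) :
    𝔞 • (⊤ : Submodule R M) < ⊤ := by
  refine lt_top_iff_ne_top.2 fun htop => h (idealGrade_eq_top_of_sup_annihilator ?_)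
  obtain ⟨a, ha, haM⟩ := Submodule.exists_sub_one_mem_and_smul_eq_zero_of_fg_of_le_smul 𝔞 ⊤
    Module.Finite.fg_top htop.ge
  rw [Ideal.eq_top_iff_one, ← sub_sub_self a 1]
  exact sub_mem (Ideal.mem_sup_right <| Module.mem_annihilator.2 fun m => haM m trivial)
    (Ideal.mem_sup_left ha)

theorem isGreatest_length_isRegular [IsNoetherianRing R] [Module.Finite R M] {r : ℕ}
    (h : idealGrade 𝔞 M = r) :
    IsGreatest {m | ∃ l : List R, l.length = m ∧ (∀ f ∈ l, f ∈ 𝔞) ∧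
      RingTheory.Sequence.IsRegular M l} r := by
  have hlt : 𝔞 • (⊤ : Submodule R M) < ⊤ :=
    smul_top_lt_top_of_idealGrade_ne_top (h ▸ ENat.natCast_ne_top r)
  have hsupp : Module.support R (R ⧸ 𝔞) = PrimeSpectrum.zeroLocus 𝔞 := by
    rw [Module.support_eq_zeroLocus, Ideal.annihilator_quotient]
  constructor
  · exact ModuleCat.exists_isRegular_of_exists_subsingleton_ext 𝔞 r (.of R M) hlt (.of R (R ⧸ 𝔞))
      hsupp (natCast_le_extGrade_iff.1 h.ge)
  · rintro _ ⟨l, rfl, hl, hreg⟩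
    rw [← Nat.cast_le (α := ℕ∞), ← h]
    exact natCast_le_extGrade_iff.2 (ModuleCat.subsingleton_ext_of_exists_isRegular 𝔞
      (.of R (R ⧸ 𝔞)) hsupp.subset (.of R M) hlt l hl hreg)

end IdealGrade

section Variables

variable {σ R : Type*} [CommRing R] {A : Set σ}

lemma isSMulRegular_quotient_span_X_image {j : σ} (hj : j ∉ A) :
    IsSMulRegular (MvPolynomial σ R ⧸ Ideal.span (X (R := R) '' A)) (X j : MvPolynomial σ R) := by
  classical
  refine (isSMulRegular_quotient_iff_mem_of_smul_mem _ _).2 fun f hf => ?_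
  simp only [smul_eq_mul, mem_ideal_span_X_image, support_X_mul, Finset.mem_map,
    forall_exists_index, and_imp, forall_apply_eq_imp_iff₂] at hf ⊢
  intro m hm
  obtain ⟨i, hiA, hi⟩ := hf m hm
  exact ⟨i, hiA, by simpa [(ne_of_mem_of_not_mem hiA hj).symm] using hi⟩

open scoped Pointwise in
lemma idealGrade_quotient_span_X_image_compl [Nontrivial R] {B : Set σ} (hB : B.Finite) :
    idealGrade (idealOfVars σ R) (MvPolynomial σ R ⧸ Ideal.span (X (R := R) '' Bᶜ)) =
      B.encard := by
  induction B, hB using Set.Finite.induction_on with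
  | empty =>
    rw [Set.compl_empty, Set.image_univ, Set.encard_empty]
    refine idealGrade_quotient_self ((Ideal.ne_top_iff_one _).2 fun h => ?_)
    rw [idealOfVars, ← Set.image_univ, mem_ideal_span_X_image] at h
    simpa using h 0
  | @insert j B hj _ ih =>
    have hX : Ideal.span (X (R := R) '' (insert j B)ᶜ) ⊔ X (R := R) j • ⊤ =
        Ideal.span (X (R := R) '' Bᶜ) := by
      rw [← Submodule.ideal_span_singleton_smul, smul_eq_mul, Ideal.mul_top, sup_comm,
        ← Ideal.span_insert, ← Set.image_insert_eq]
      congr; grind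
    rw [idealGrade_quotient_eq_idealGrade_quotient_sup_add_one
      (Ideal.subset_span (Set.mem_range_self j))
      (isSMulRegular_quotient_span_X_image (by simp)), hX, ih, Set.encard_insert_of_notMem hj]

end Variables

section SupportIdeal

variable {σ : Type*} (R : Type*) [CommSemiring R]

/-- The squarefree monomial ideal of the polynomials all of whose monomials have support in `U`.
Every squarefree monomial ideal is of this form. -/
noncomputable def supportIdeal (U : UpperSet (Set σ)) : Ideal (MvPolynomial σ R) :=
  restrictSupportIdeal R {m | (m.support : Set σ) ∈ U} fun _ _ hle =>
    U.upper (Finset.coe_subset.2 (Finsupp.support_mono hle))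

variable {R} {U V : UpperSet (Set σ)}

lemma mem_supportIdeal {f : MvPolynomial σ R} :
    f ∈ supportIdeal R U ↔ ∀ m ∈ f.support, (m.support : Set σ) ∈ U :=
  Iff.rfl

lemma supportIdeal_antitone : Antitone (supportIdeal (σ := σ) R) :=
  fun _ _ hUV _ hf => mem_supportIdeal.2 fun m hm => hUV (mem_supportIdeal.1 hf m hm)

lemma supportIdeal_sup : supportIdeal R (U ⊔ V) = supportIdeal R U ⊓ supportIdeal R V := by
  ext f
  simp only [Submodule.mem_inf, mem_supportIdeal, UpperSet.mem_sup_iff, forall₂_and]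

lemma supportIdeal_inf : supportIdeal R (U ⊓ V) = supportIdeal R U ⊔ supportIdeal R V := by
  classical
  refine le_antisymm (fun f hf => ?_)
    (sup_le (supportIdeal_antitone inf_le_left) (supportIdeal_antitone inf_le_right))
  have monomial_mem {W : UpperSet (Set σ)} {m : σ →₀ ℕ} (hm : (m.support : Set σ) ∈ W) :
      monomial m (f.coeff m) ∈ supportIdeal R W := mem_supportIdeal.2 fun m' hm' => by
    rwa [Finset.mem_singleton.1 (support_monomial_subset hm')]
  rw [f.as_sum]
  exact sum_mem fun m hm => (UpperSet.mem_inf_iff.1 (mem_supportIdeal.1 hf m hm)).elim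
    (Ideal.mem_sup_left <| monomial_mem ·) (Ideal.mem_sup_right <| monomial_mem ·)

/-- The upper set of the sets meeting `A`; its squarefree monomial ideal is generated by the
variables in `A`. -/
def meeting (A : Set σ) : UpperSet (Set σ) :=
  ⟨{S | (S ∩ A).Nonempty}, fun _ _ hST hS => hS.mono (Set.inter_subset_inter_left A hST)⟩

lemma supportIdeal_meeting (A : Set σ) : supportIdeal R (meeting A) = Ideal.span (X '' A) := by
  ext f
  rw [mem_ideal_span_X_image, mem_supportIdeal]
  refine forall₂_congr fun m _ => ?_
  exact exists_congr fun i => by simp [and_comm]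

end SupportIdeal

section SupportGrade

variable {σ : Type*} (R : Type*) [CommRing R]

/-- The grade of the ideal of variables on the quotient by the squarefree monomial ideal of `U`. -/
noncomputable def supportGrade (U : UpperSet (Set σ)) : ℕ∞ :=
  idealGrade (idealOfVars σ R) (MvPolynomial σ R ⧸ supportIdeal R U)

variable {R}

lemma supportGrade_meeting [Nontrivial R] {A : Set σ} (hA : Aᶜ.Finite) :
    supportGrade R (meeting A) = Aᶜ.encard := by
  rw [supportGrade, supportIdeal_meeting, ← idealGrade_quotient_span_X_image_compl (R := R) hA,
    compl_compl]

lemma supportGrade_sup_eq_add_one {U V : UpperSet (Set σ)}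
    (hU : supportGrade R (U ⊓ V) + 1 ≤ supportGrade R U)
    (hV : supportGrade R (U ⊓ V) + 1 ≤ supportGrade R V) :
    supportGrade R (U ⊔ V) = supportGrade R (U ⊓ V) + 1 := by
  unfold supportGrade at *
  rw [supportIdeal_inf] at hU hV ⊢
  rw [supportIdeal_sup, idealGrade_quotient_inf_eq_add_one _ _ hU hV]

end SupportGrade

section MatroidIdeal

variable {σ : Type*} (M : Matroid σ) (G A : Set σ)

/-- The upper set of the sets that meet `A` or span `M` together with `G`. -/
def meetingOrSpanning : UpperSet (Set σ) :=
  ⟨{S | (S ∩ A).Nonempty ∨ M.eRank ≤ M.eRk (S ∪ G)}, fun _ _ hST =>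
    Or.imp (·.mono (Set.inter_subset_inter_left A hST))
      (·.trans (M.eRk_mono (Set.union_subset_union_left G hST)))⟩

variable {M G A}

lemma mem_meetingOrSpanning {S : Set σ} :
    S ∈ meetingOrSpanning M G A ↔ (S ∩ A).Nonempty ∨ M.eRank ≤ M.eRk (S ∪ G) :=
  Iff.rfl

lemma meetingOrSpanning_eq_meeting_of_eRk_compl_union_lt (h : M.eRk (Aᶜ ∪ G) < M.eRank) :
    meetingOrSpanning M G A = meeting A := by
  ext S
  refine or_iff_left_of_imp fun hS => Set.not_disjoint_iff_nonempty_inter.1 fun hSA => ?_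
  exact h.not_ge (hS.trans (M.eRk_mono (Set.union_subset_union_left G hSA.subset_compl_right)))

lemma meetingOrSpanning_inf {G' A' : Set σ} (hG : G ⊆ G') (hA : A ⊆ A') :
    meetingOrSpanning M G' A ⊓ meetingOrSpanning M G A' = meetingOrSpanning M G' A' := by
  refine SetLike.ext fun S => ?_
  have hrk : M.eRk (S ∪ G) ≤ M.eRk (S ∪ G') := M.eRk_mono (Set.union_subset_union_right S hG)
  have hmeet : (S ∩ A).Nonempty → (S ∩ A').Nonempty := (·.mono (Set.inter_subset_inter_right S hA))
  simp only [UpperSet.mem_inf_iff, mem_meetingOrSpanning]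
  grind

lemma meetingOrSpanning_sup (hG : M.IsFlat G) (e : σ) :
    meetingOrSpanning M (M.closure (insert e G)) A ⊔
      meetingOrSpanning M G (A ∪ M.closure (insert e G) \ G) = meetingOrSpanning M G A := by
  refine SetLike.ext fun S => ?_
  have eRk_union_closure_insert {f : σ} (hfS : f ∈ S) (hf : f ∈ M.closure (insert e G) \ G) :
      M.eRk (S ∪ M.closure (insert e G)) = M.eRk (S ∪ G) := by
    rw [← Matroid.closure_insert_congr (by rwa [hG.closure]), M.eRk_union_closure_right_eq,
      Set.union_insert, Set.insert_eq_of_mem (Set.mem_union_left G hfS)]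
  have hle : M.eRk (S ∪ G) ≤ M.eRk (S ∪ M.closure (insert e G)) := by
    rw [M.eRk_union_closure_right_eq]
    exact M.eRk_mono (Set.union_subset_union_right S (Set.subset_insert e G))
  simp only [UpperSet.mem_sup_iff, mem_meetingOrSpanning, Set.inter_union_distrib_left,
    Set.union_nonempty]
  constructor
  · rintro ⟨hleft, (hSA | ⟨f, hfS, hf⟩) | hspan⟩
    · exact .inl hSA
    · exact hleft.imp_right (eRk_union_closure_insert hfS hf ▸ ·)
    · exact .inr hspan
  · exact fun h => ⟨h.imp_right hle.trans', h.imp_left .inl⟩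

lemma eRk_closure_insert_eq_add_one (hE : M.E = Set.univ) (hG : M.IsFlat G) {e : σ} (he : e ∉ G) :
    M.eRk (M.closure (insert e G)) = M.eRk G + 1 := by
  rw [M.eRk_closure_eq, Matroid.eRk_insert_eq_add_one ⟨hE ▸ trivial, by rwa [hG.closure]⟩]

lemma meetingOrSpanning_eq_meeting_of_eRk_add_one [M.RankFinite] (hE : M.E = Set.univ)
    (hG : M.IsFlat G) (hrank : M.eRk G + 1 = M.eRank) :
    meetingOrSpanning M G A = meeting (A ∪ Gᶜ) := by
  refine SetLike.ext fun S => ?_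
  have hspan : M.eRank ≤ M.eRk (S ∪ G) ↔ (S ∩ Gᶜ).Nonempty := by
    constructor
    · refine fun h => Set.inter_compl_nonempty_iff.2 fun hSG => ?_
      rw [Set.union_eq_self_of_subset_left hSG, ← hrank] at h
      exact (ENat.lt_add_one_iff (M.isRkFinite_set G).eRk_lt_top.ne).2 le_rfl |>.not_ge h
    · rintro ⟨s, hsS, hsG⟩
      rw [← hrank, ← eRk_closure_insert_eq_add_one hE hG hsG, M.eRk_closure_eq]
      exact M.eRk_mono (Set.insert_subset (.inl hsS) Set.subset_union_right)
  rw [mem_meetingOrSpanning, hspan, ← Set.union_nonempty, ← Set.inter_union_distrib_left]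
  rfl

lemma natCast_le_encard_compl_of_eRank_le [M.RankFinite] {k : ℕ}
    (hA : M.eRank ≤ M.eRk (Aᶜ ∪ G)) (hk : M.eRk G + k = M.eRank) :
    (k : ℕ∞) ≤ (A ∪ G)ᶜ.encard := by
  have hrk : M.eRk G + k ≤ M.eRk G + (A ∪ G)ᶜ.encard :=
    calc M.eRk G + k ≤ M.eRk (Aᶜ ∪ G) := hk.trans_le hA
      _ = M.eRk ((A ∪ G)ᶜ ∪ G) := by congr 1; grind
      _ ≤ (A ∪ G)ᶜ.encard + M.eRk G := M.eRk_union_le_encard_add_eRk _ _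
      _ = M.eRk G + (A ∪ G)ᶜ.encard := add_comm _ _
  exact (ENat.add_le_add_iff_left (M.isRkFinite_set G).eRk_lt_top.ne).1 hrk

variable {R : Type*} [CommRing R]

lemma supportGrade_meetingOrSpanning_eq_add_one {e : σ} {r : ℕ∞} (hG : M.IsFlat G)
    (hsub : G ⊆ M.closure (insert e G))
    (hinf : supportGrade R (meetingOrSpanning M (M.closure (insert e G))
      (A ∪ M.closure (insert e G) \ G)) = r)
    (hleft : r + 1 ≤ supportGrade R (meetingOrSpanning M (M.closure (insert e G)) A))
    (hright : r + 1 ≤ supportGrade R (meetingOrSpanning M G (A ∪ M.closure (insert e G) \ G))) :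
    supportGrade R (meetingOrSpanning M G A) = r + 1 := by
  rw [← meetingOrSpanning_inf hsub Set.subset_union_left] at hinf
  subst hinf
  rw [← supportGrade_sup_eq_add_one hleft hright, meetingOrSpanning_sup hG]

variable [Nontrivial R] [Finite σ]

lemma supportGrade_meetingOrSpanning_of_eRk_add_one (hE : M.E = Set.univ) (hG : M.IsFlat G)
    (hrank : M.eRk G + 1 = M.eRank) :
    supportGrade R (meetingOrSpanning M G A) = (G \ A).encard := by
  rw [meetingOrSpanning_eq_meeting_of_eRk_add_one hE hG hrank,
    supportGrade_meeting (Set.toFinite _), Set.compl_union, compl_compl, Set.inter_comm,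
    Set.sdiff_eq]

lemma le_supportGrade_meetingOrSpanning_of_eRk_lt {G' : Set σ} {k : ℕ} (hGG' : G ⊆ G')
    (hlt : M.eRk ((A ∪ G' \ G)ᶜ ∪ G) < M.eRank) (hA : M.eRank ≤ M.eRk (Aᶜ ∪ G'))
    (hk : M.eRk G' + k = M.eRank) :
    k + (G \ A).encard ≤ supportGrade R (meetingOrSpanning M G (A ∪ G' \ G)) := by
  rw [meetingOrSpanning_eq_meeting_of_eRk_compl_union_lt hlt, supportGrade_meeting (Set.toFinite _)]
  calc k + (G \ A).encard
      ≤ (A ∪ G')ᶜ.encard + (G \ A).encard := by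
        gcongr; exact natCast_le_encard_compl_of_eRank_le hA hk
    _ = ((A ∪ G')ᶜ ∪ G \ A).encard :=
        (Set.encard_union_eq (Set.disjoint_left.2 (by grind))).symm
    _ ≤ (A ∪ G' \ G)ᶜ.encard := Set.encard_mono (by grind)

theorem supportGrade_meetingOrSpanning (hE : M.E = Set.univ) {k : ℕ} (hG : M.IsFlat G)
    (hA : M.eRank ≤ M.eRk (Aᶜ ∪ G)) (hk : M.eRk G + (k + 1) = M.eRank) :
    supportGrade R (meetingOrSpanning M G A) = k + (G \ A).encard := by
  have sdiff_left {G G' : Set σ} (A : Set σ) (h : G ⊆ G') : G' \ (A ∪ G' \ G) = G \ A := by grind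
  have sdiff_right (G G' A : Set σ) : G \ (A ∪ G' \ G) = G \ A := by grind
  induction h : (G ∪ A)ᶜ.ncard using Nat.strong_induction_on generalizing k G A with | _ n ih
  obtain _ | k := k
  · rw [supportGrade_meetingOrSpanning_of_eRk_add_one hE hG (by simpa using hk), Nat.cast_zero,
      zero_add]
  obtain ⟨e, he⟩ : (A ∪ G)ᶜ.Nonempty :=
    Set.one_le_encard_iff_nonempty.1 <|
      (by simp : (1 : ℕ∞) ≤ (k + 1 + 1 : ℕ)).trans (natCast_le_encard_compl_of_eRank_le hA hk)
  obtain ⟨heA, heG⟩ : e ∉ A ∧ e ∉ G := not_or.1 he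
  let G' := M.closure (insert e G)
  let A' := A ∪ G' \ G
  have hG' : M.IsFlat G' := M.isFlat_closure _
  obtain ⟨heG', hGG'⟩ : e ∈ G' ∧ G ⊆ G' :=
    Set.insert_subset_iff.1 (M.subset_closure _ (hE ▸ Set.subset_univ _))
  have hk' : M.eRk G' + (k + 1) = M.eRank := by
    rw [eRk_closure_insert_eq_add_one hE hG heG, ← hk, add_right_comm, add_assoc, Nat.cast_add_one]
  have hAG' : M.eRank ≤ M.eRk (Aᶜ ∪ G') :=
    hA.trans (M.eRk_mono (Set.union_subset_union_right Aᶜ hGG'))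
  have hA'G' : Aᶜ ∪ G' ⊆ A'ᶜ ∪ G' := fun x hx => or_iff_not_imp_right.2 fun hxG' hxA' =>
    hxA'.elim (hx.resolve_right hxG') (hxG' ·.1)
  have ncard_lt {B C : Set σ} (hB : G ⊆ B) (hC : A ⊆ C) (heBC : e ∈ B ∪ C) :
      (B ∪ C)ᶜ.ncard < n :=
    h ▸ Set.ncard_lt_ncard (compl_lt_compl_iff_lt.2
      ⟨Set.union_subset_union hB hC, fun hsub => (hsub heBC).elim heG heA⟩) (Set.toFinite _)
  rw [Nat.cast_add_one, add_right_comm]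
  refine supportGrade_meetingOrSpanning_eq_add_one hG hGG' ?_ ?_ ?_
  · rw [ih _ (ncard_lt hGG' Set.subset_union_left (.inl heG')) hG' (hAG'.trans (M.eRk_mono hA'G'))
      hk' rfl, sdiff_left A hGG']
  · rw [ih _ (ncard_lt hGG' subset_rfl (.inl heG')) hG' hAG' hk' rfl, add_assoc,
      ← Set.encard_insert_of_notMem fun he : e ∈ G \ A => heG he.1]
    gcongr
    exact Set.insert_subset ⟨heG', heA⟩ (Set.sdiff_subset_sdiff_left hGG')
  · by_cases hA' : M.eRank ≤ M.eRk (A'ᶜ ∪ G)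
    · have heA' : e ∈ A' := .inr ⟨heG', heG⟩
      rw [ih _ (ncard_lt subset_rfl Set.subset_union_left (.inr heA')) hG hA' hk rfl,
        sdiff_right, Nat.cast_add_one, add_right_comm]
    · rw [add_right_comm]
      exact le_supportGrade_meetingOrSpanning_of_eRk_lt hGG' (not_le.1 hA') hAG' hk'

end MatroidIdeal

section MonomialGenerators

variable {σ : Type*}

lemma le_one_of_squarefree_monomial {R : Type*} [CommSemiring R] [Nontrivial R] {m : σ →₀ ℕ} {r : R}
    (hm : Squarefree (monomial m r)) (i : σ) : m i ≤ 1 := by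
  by_contra! hi
  have hdvd : (X i * X i : MvPolynomial σ R) ∣ monomial m r := by
    rw [X, monomial_mul, ← Finsupp.single_add, one_mul, monomial_dvd_monomial]
    exact ⟨.inr (Finsupp.single_le_iff.2 hi), one_dvd r⟩
  simpa using (hm _ hdvd).map (eval (0 : σ → R))

lemma le_iff_support_subset_of_le_one {m m' : σ →₀ ℕ} (hm : ∀ i, m i ≤ 1) :
    m ≤ m' ↔ m.support ⊆ m'.support := by
  refine ⟨Finsupp.support_mono, fun hsub i => ?_⟩
  obtain hi | hi := Nat.le_one_iff_eq_zero_or_eq_one.1 (hm i)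
  · exact hi ▸ Nat.zero_le _
  · exact (hm i).trans (Nat.one_le_iff_ne_zero.2 (Finsupp.mem_support_iff.1 (hsub (by simp [hi]))))

lemma coe_support_eq_insert_sdiff {m v : σ →₀ ℕ} {k l : σ} (hk : m k = 1) (hl : m l = 0)
    (h : Finsupp.single l 1 + m = Finsupp.single k 1 + v) :
    (v.support : Set σ) = insert l ((m.support : Set σ) \ {k}) := by
  classical
  ext i
  have hi := DFunLike.congr_fun h i
  simp only [Finsupp.add_apply, Finsupp.single_apply] at hi
  simp only [Finset.mem_coe, Finsupp.mem_support_iff, Set.mem_insert_iff, Set.mem_sdiff,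
    Set.mem_singleton_iff]
  grind

variable {K : Type*} [Field K] {I : Ideal (MvPolynomial σ K)}

lemma exists_le_monomial_mem_minGens_s3 [Finite σ] {m : σ →₀ ℕ} (hm : monomial m (1 : K) ∈ I) :
    ∃ g ≤ m, monomial g (1 : K) ∈ minGens K I := by
  obtain ⟨g, hgm, hg⟩ := exists_minimal_le_of_wellFoundedLT (fun e => monomial e (1 : K) ∈ I) m hm
  refine ⟨g, hgm, ⟨g, rfl⟩, hg.1, ?_⟩
  rintro _ ⟨v, rfl⟩ hv hdvd
  have hvg : v ≤ g := by simpa using (monomial_dvd_monomial.1 hdvd).1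
  rw [hvg.antisymm (hg.2 hv hvg)]

lemma mem_iff_exists_minGens_le [Finite σ] (hI : IsMonomialIdeal K I) {f : MvPolynomial σ K} :
    f ∈ I ↔ ∀ m ∈ f.support, ∃ g ≤ m, monomial g (1 : K) ∈ minGens K I := by
  constructor
  · obtain ⟨S, hS, hIS⟩ := hI
    have himage : (fun m => monomial m (1 : K)) '' {m | monomial m 1 ∈ S} = S := by
      refine Set.Subset.antisymm (Set.image_subset_iff.2 fun _ => id) fun u hu => ?_
      obtain ⟨m, rfl⟩ := hS u hu
      exact ⟨m, hu, rfl⟩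
    intro hf m hm
    rw [hIS, ← himage, mem_ideal_span_monomial_image] at hf
    obtain ⟨s, hs, hsm⟩ := hf m hm
    have hsI : monomial s (1 : K) ∈ I := hIS ▸ Ideal.subset_span hs
    obtain ⟨g, hgs, hg⟩ := exists_le_monomial_mem_minGens_s3 hsI
    exact ⟨g, hgs.trans hsm, hg⟩
  · intro hf
    rw [f.as_sum]
    refine sum_mem fun m hm => ?_
    obtain ⟨g, hgm, hg⟩ := hf m hm
    exact I.mem_of_dvd (monomial_dvd_monomial.2 ⟨.inr hgm, one_dvd _⟩) hg.2.1

variable (I) in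
/-- The supports of the minimal monomial generators of `I`. For a matroidal ideal they are the
bases of a matroid. -/
def genSupports : Set (Set σ) :=
  {B | ∃ m : σ →₀ ℕ, monomial m (1 : K) ∈ minGens K I ∧ m.support = B}

lemma mem_iff_exists_genSupports_subset [Finite σ] (hI : IsSqfreeMonomialIdeal K I)
    {f : MvPolynomial σ K} :
    f ∈ I ↔ ∀ m ∈ f.support, ∃ B ∈ genSupports I, B ⊆ m.support := by
  rw [mem_iff_exists_minGens_le hI.1]
  refine forall₂_congr fun m _ => ⟨?_, ?_⟩
  · rintro ⟨g, hgm, hg⟩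
    exact ⟨g.support, ⟨g, hg, rfl⟩, Finset.coe_subset.2 (Finsupp.support_mono hgm)⟩
  · rintro ⟨_, ⟨g, hg, rfl⟩, hgm⟩
    exact ⟨g, (le_iff_support_subset_of_le_one (le_one_of_squarefree_monomial (hI.2 _ hg))).2
      (Finset.coe_subset.1 hgm), hg⟩

lemma encard_eq_of_mem_genSupports {d : ℕ} (hsq : ∀ u ∈ minGens K I, Squarefree u)
    (hdeg : ∀ u ∈ minGens K I, totalDegree u = d) {B : Set σ} (hB : B ∈ genSupports I) :
    B.encard = d := by
  obtain ⟨m, hm, rfl⟩ := hB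
  have hm1 : ∀ i ∈ m.support, m i = 1 := fun i hi =>
    (le_one_of_squarefree_monomial (hsq _ hm) i).antisymm
      (Nat.one_le_iff_ne_zero.2 (Finsupp.mem_support_iff.1 hi))
  rw [Set.encard_coe_eq_coe_finsetCard, ← hdeg _ hm, totalDegree_monomial m one_ne_zero,
    Finsupp.sum, Finset.sum_congr rfl hm1, Finset.card_eq_sum_ones]

lemma exchangeProperty_genSupports (hI : IsMatroidal K I) :
    Matroid.ExchangeProperty (· ∈ genSupports I) := by
  rintro _ _ ⟨m, hm, rfl⟩ ⟨m', hm', rfl⟩ k ⟨hkm, hkm'⟩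
  simp only [Finset.mem_coe, Finsupp.mem_support_iff, not_not] at hkm hkm'
  have hdegree (g : σ →₀ ℕ) (i : σ) : degreeOf i (monomial g (1 : K)) = g i :=
    degreeOf_monomial_eq g i one_ne_zero
  obtain ⟨l, hl, w, hw, hlw⟩ := hI.1.2.2 _ hm _ hm' k (by rw [hdegree, hdegree]; lia)
  rw [hdegree, hdegree] at hl
  have hmk : m k = 1 := by have := le_one_of_squarefree_monomial (hI.2 _ hm) k; lia
  have hml : m l = 0 := by have := le_one_of_squarefree_monomial (hI.2 _ hm') l; lia
  obtain ⟨v, hv⟩ := hlw.1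
  have hmv : Finsupp.single l 1 + m = Finsupp.single k 1 + v := by
    refine monomial_left_injective (R := K) one_ne_zero ?_
    simp only [monomial_single_add, pow_one, hw, ← hv]
    ring
  refine ⟨l, ⟨by simpa using (Nat.zero_le _).trans_lt hl |>.ne', by simpa using hml⟩, v,
    hv ▸ hlw, coe_support_eq_insert_sdiff hmk hml hmv⟩

lemma exists_matroid_isBase_iff_mem_genSupports [Finite σ] (hI : IsMatroidal K I)
    (hne : (minGens K I).Nonempty) :
    ∃ M : Matroid σ, M.E = Set.univ ∧ ∀ B, M.IsBase B ↔ B ∈ genSupports I := by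
  obtain ⟨_, hu⟩ := hne
  obtain ⟨m, rfl⟩ := hu.1
  exact ⟨.ofIsBaseOfFinite Set.finite_univ (· ∈ genSupports I) ⟨m.support, m, hu, rfl⟩
    (exchangeProperty_genSupports hI) fun B _ => B.subset_univ, rfl, fun _ => Iff.rfl⟩

variable {M : Matroid σ} (hM : ∀ B, M.IsBase B ↔ B ∈ genSupports I)

include hM

lemma eq_supportIdeal_meetingOrSpanning_empty [Finite σ] (hI : IsSqfreeMonomialIdeal K I)
    (hE : M.E = Set.univ) :
    I = supportIdeal K (meetingOrSpanning M ∅ ∅) := by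
  ext f
  rw [mem_iff_exists_genSupports_subset hI, mem_supportIdeal]
  refine forall₂_congr fun m _ => ?_
  rw [mem_meetingOrSpanning, Set.inter_empty, Set.union_empty, or_iff_right Set.not_nonempty_empty]
  constructor
  · rintro ⟨B, hB, hBm⟩
    exact ((hM B).2 hB).eRk_eq_eRank.ge.trans (M.eRk_mono hBm)
  · intro hspan
    obtain ⟨B, hB, hBm⟩ := ((Matroid.spanning_iff_eRk_le (hE ▸ Set.subset_univ _)).2
      hspan).exists_isBase_subset
    exact ⟨B, (hM B).1 hB, hBm⟩

lemma eRank_eq_of_isBase_iff_mem_genSupports {d : ℕ} (hsq : ∀ u ∈ minGens K I, Squarefree u)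
    (hdeg : ∀ u ∈ minGens K I, totalDegree u = d) : M.eRank = d := by
  obtain ⟨B, hB⟩ := M.exists_isBase
  rw [← hB.encard_eq_eRank, encard_eq_of_mem_genSupports hsq hdeg ((hM B).1 hB)]

lemma loopless_of_isBase_iff_mem_genSupports (hsupp : ∀ i, ∃ u ∈ minGens K I, X i ∣ u) :
    M.Loopless := by
  refine Matroid.loopless_iff_forall_isNonloop.2 fun i _ => ?_
  obtain ⟨_, hu, hi⟩ := hsupp i
  obtain ⟨m, rfl⟩ := hu.1
  have hbase : M.IsBase m.support := (hM _).2 ⟨m, hu, rfl⟩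
  exact hbase.indep.isNonloop_of_mem (by simpa [X_dvd_monomial] using hi)

end MonomialGenerators

section Depth

variable {σ : Type*}

lemma supportGrade_meetingOrSpanning_empty [Finite σ] {R : Type*} [CommRing R] [Nontrivial R]
    {M : Matroid σ} [M.Loopless] (hE : M.E = Set.univ) {k : ℕ} (hk : M.eRank = k + 1) :
    supportGrade R (meetingOrSpanning M ∅ ∅) = k := by
  have hflat : M.IsFlat ∅ := M.loops_eq_empty ▸ M.isFlat_closure ∅
  have hspan : M.eRank ≤ M.eRk (∅ᶜ ∪ ∅) := by
    rw [Set.compl_empty, Set.union_empty, ← hE, M.eRk_ground]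
  rw [supportGrade_meetingOrSpanning hE hflat hspan (by rw [M.eRk_empty, zero_add, hk]),
    Set.empty_sdiff, Set.encard_empty, add_zero]

variable {K : Type*} [Field K]

lemma qdepth_top : qdepth K (⊤ : Ideal (MvPolynomial σ K)) = 0 := by
  have := Ideal.Quotient.subsingleton_iff.2 (rfl : (⊤ : Ideal (MvPolynomial σ K)) = ⊤)
  refine (congrArg sSup (Set.eq_empty_of_forall_notMem ?_)).trans csSup_empty
  rintro _ ⟨l, -, -, hreg⟩
  exact hreg.top_ne_smul (Subsingleton.elim _ _)

lemma qdepth_supportIdeal [Finite σ] {U : UpperSet (Set σ)} {r : ℕ} (h : supportGrade K U = r) :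
    qdepth K (supportIdeal K U) = r :=
  (isGreatest_length_isRegular h).csSup_eq

theorem depth_of_matroidal_general [Finite σ] (I : Ideal (MvPolynomial σ K)) (d : ℕ)
    (hmat : IsMatroidal K I) (hne : (minGens K I).Nonempty)
    (hdeg : ∀ u ∈ minGens K I, totalDegree u = d)
    (hsupp : ∀ i, ∃ u ∈ minGens K I, X i ∣ u) :
    qdepth K I = d - 1 := by
  obtain ⟨M, hE, hM⟩ := exists_matroid_isBase_iff_mem_genSupports hmat hne
  have hrank : M.eRank = d := eRank_eq_of_isBase_iff_mem_genSupports hM hmat.2 hdeg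
  have hloop : M.Loopless := loopless_of_isBase_iff_mem_genSupports hM hsupp
  rw [eq_supportIdeal_meetingOrSpanning_empty hM ⟨hmat.1.1, hmat.2⟩ hE]
  cases d with
  | zero =>
    have htop : supportIdeal K (meetingOrSpanning M ∅ ∅) = ⊤ :=
      Submodule.eq_top_iff'.2 fun _ _ _ => .inr (hrank.trans_le bot_le)
    rw [htop, qdepth_top]
  | succ k => exact qdepth_supportIdeal (supportGrade_meetingOrSpanning_empty hE hrank)

end Depth

/-- Let `I ⊂ S = K[x_1,…,x_n]` be a matroidal ideal generated in
degree `d` with `supp(I) = [n]`. Then `depth(S/I) = d − 1`. -/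
theorem depth_of_matroidal {K : Type*} [Field K] {n : ℕ}
    (I : Ideal (MvPolynomial (Fin n) K)) (d : ℕ)
    (hmat : IsMatroidal K I)
    (hne : (minGens K I).Nonempty)
    (hdeg : ∀ u ∈ minGens K I, totalDegree u = d)
    (hsupp : ∀ i : Fin n, ∃ u ∈ minGens K I, X i ∣ u) :
    qdepth K I = d - 1 :=
  depth_of_matroidal_general I d hmat hne hdeg hsupp
end

section
/- The squarefree part of a polymatroidal ideal is a matroidal ideal. That is, if I ⊂ S = K[x_1,…,x_n] is a polymatroidal ideal and I' is the ideal generated by the squarefree monomials among the minimal generators of I, then I' is a matroidal ideal. -/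
open MvPolynomial

/-!
If `u` and `v` are squarefree generators and `x_l` has smaller degree in `u` than in `v`, then
`x_l` divides `v` exactly once and `u` not at all. So `x_l * u` is squarefree, and hence so is its
divisor `x_l * (u / x_k)`: the exchange in the polymatroidal ideal never leaves the squarefree
generators. These are exactly the minimal generators of the ideal they span.
-/

section Squarefree

variable {σ R : Type*}

theorem squarefree_irreducible_mul_iff {M : Type*} [CommMonoidWithZero M] [IsCancelMulZero M]
    [DecompositionMonoid M] {p a : M} (hp : Irreducible p) :
    Squarefree (p * a) ↔ ¬ p ∣ a ∧ Squarefree a := by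
  rw [squarefree_mul_iff, hp.isRelPrime_iff_not_dvd, and_iff_right hp.squarefree]

theorem degreeOf_pos_of_X_dvd [CommSemiring R] {i : σ} {f : MvPolynomial σ R}
    (hf : f ≠ 0) (hdvd : X i ∣ f) : 0 < degreeOf i f := by
  obtain ⟨g, rfl⟩ := hdvd
  rw [mul_comm, (degreeOf_mul_X_eq_degreeOf_add_one_iff i g).2 (right_ne_zero_of_mul hf)]
  exact Nat.succ_pos _

theorem squarefree_X_mul_of_degreeOf_eq_zero [CommRing R] [IsDomain R]
    [UniqueFactorizationMonoid R] {i : σ} {f : MvPolynomial σ R}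
    (hf : Squarefree f) (hdeg : degreeOf i f = 0) : Squarefree (X i * f) :=
  (squarefree_irreducible_mul_iff X_prime.irreducible).2
    ⟨fun hdvd => (degreeOf_pos_of_X_dvd hf.ne_zero hdvd).ne' hdeg, hf⟩

theorem degreeOf_monomial_le_one_of_squarefree [CommSemiring R] [Nontrivial R] {s : σ →₀ ℕ} {a : R}
    (hsq : Squarefree (monomial s a)) (i : σ) : degreeOf i (monomial s a) ≤ 1 := by
  have ha : a ≠ 0 := fun ha => hsq.ne_zero (by rw [ha, map_zero])
  rw [degreeOf_monomial_eq s i ha]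
  by_contra! hi
  have sq_dvd : X i * X i ∣ monomial s a := by
    rw [← sq, X_pow_eq_monomial, monomial_dvd_monomial]
    exact ⟨Or.inr (Finsupp.single_le_iff.2 hi), one_dvd a⟩
  have not_dvd_one : ¬ (X i : MvPolynomial σ R) ∣ monomial 0 1 := by
    rw [X_dvd_monomial]
    simp
  exact not_dvd_one (hsq _ sq_dvd).dvd

end Squarefree

section MinGens

variable {K : Type*} [Field K] {σ : Type*}

theorem IsMonomial.exists_mem_dvd_of_mem_span {A : Set (MvPolynomial σ K)}
    (hA : ∀ v ∈ A, IsMonomial K v) {u : MvPolynomial σ K} (hu : IsMonomial K u)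
    (hmem : u ∈ Ideal.span A) : ∃ v ∈ A, v ∣ u := by
  obtain ⟨d, rfl⟩ := hu
  have image_preimage : (fun s => monomial s (1 : K)) '' ((fun s => monomial s 1) ⁻¹' A) = A :=
    Set.image_preimage_eq_of_subset fun v hv => (hA v hv).imp fun _ => Eq.symm
  rw [← image_preimage, mem_ideal_span_monomial_image_iff_dvd] at hmem
  have coeff_self : coeff d (monomial d (1 : K)) = 1 := by
    classical rw [coeff_monomial, if_pos rfl]
  obtain ⟨s, hs, hdvd⟩ := hmem d (mem_support_iff.2 (coeff_self.trans_ne one_ne_zero))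
  exact ⟨monomial s 1, hs, by rwa [coeff_self] at hdvd⟩

theorem minGens_span_of_subset_minGens {I : Ideal (MvPolynomial σ K)}
    {A : Set (MvPolynomial σ K)} (hA : A ⊆ minGens K I) : minGens K (Ideal.span A) = A := by
  ext u
  constructor
  · rintro ⟨hu, hmem, hmin⟩
    obtain ⟨v, hv, hdvd⟩ := hu.exists_mem_dvd_of_mem_span (fun v hv => (hA hv).1) hmem
    exact hmin v (hA hv).1 (Ideal.subset_span hv) hdvd ▸ hv
  · intro hu
    have span_le : Ideal.span A ≤ I := Ideal.span_le.2 fun v hv => (hA hv).2.1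
    obtain ⟨hmon, -, hmin⟩ := hA hu
    exact ⟨hmon, Ideal.subset_span hu, fun v hv hvA => hmin v hv (span_le hvA)⟩

theorem minGens_sqfPart (I : Ideal (MvPolynomial σ K)) :
    minGens K (sqfPart K I) = {u | u ∈ minGens K I ∧ Squarefree u} :=
  minGens_span_of_subset_minGens fun _ hu => hu.1

theorem IsMonomial.squarefree_exchange {v w : MvPolynomial σ K} {k l : σ} (hv : IsMonomial K v)
    (hv_sq : Squarefree v) (hu_sq : Squarefree (X k * w))
    (hlt : degreeOf l (X k * w) < degreeOf l v) : Squarefree (X l * w) := by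
  obtain ⟨s, rfl⟩ := hv
  have hdeg : degreeOf l (X k * w) = 0 :=
    Nat.lt_one_iff.1 (hlt.trans_le (degreeOf_monomial_le_one_of_squarefree hv_sq l))
  exact (squarefree_X_mul_of_degreeOf_eq_zero hu_sq hdeg).squarefree_of_dvd
    (mul_dvd_mul_left (X l) (dvd_mul_left w (X k)))

end MinGens

theorem sqfPart_isMatroidal_general {K : Type*} [Field K] {σ : Type*}
    (I : Ideal (MvPolynomial σ K)) (h : IsPolymatroidal K I) :
    IsMatroidal K (sqfPart K I) := by
  obtain ⟨-, ⟨d, hd⟩, exchange⟩ := h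
  simp only [IsMatroidal, IsPolymatroidal, minGens_sqfPart]
  refine ⟨⟨⟨_, fun u hu => hu.1.1, rfl⟩, ⟨d, fun u hu => hd u hu.1⟩, ?_⟩, fun u hu => hu.2⟩
  rintro u ⟨hu, hu_sq⟩ v ⟨hv, hv_sq⟩ k hk
  obtain ⟨l, hl, w, rfl, hw⟩ := exchange u hu v hv k hk
  exact ⟨l, hl, w, rfl, hw, hv.1.squarefree_exchange hv_sq hu_sq hl⟩

/-- The squarefree part of a polymatroidal ideal is a matroidal
ideal. -/
theorem sqfPart_isMatroidal {K : Type*} [Field K] {n : ℕ}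
    (I : Ideal (MvPolynomial (Fin n) K)) (h : IsPolymatroidal K I) :
    IsMatroidal K (sqfPart K I) :=
  sqfPart_isMatroidal_general I h
end
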